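/- Every zero-sum repeated game with an informed controller Γ(π) = (K, I, J, C, D, q, g, π) has a general uniform value: there exists v*(π) ∈ ℝ such that (i) v_θ(π) → v*(π) as I(θ) → 0, and (ii) for every ε > 0 there exist α > 0 and strategies σ* of player 1 and τ* of player 2 such that for every evaluation θ with I(θ) ≤ α: γ_θ(π, σ*, τ) ≥ v*(π) − ε for every strategy τ of player 2, and γ_θ(π, σ, τ*) ≤ v*(π) + ε for every strategy σ of player 1. -/

import Mathlib

open Set

namespace Stmt19

variable {K I J C D : Type*} [Fintype K] [Fintype I] [Fintype J] [Fintype C] [Fintype D]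

/-- The simplex of probability vectors on a finite set `T`. -/
def Δ (T : Type*) [Fintype T] : Set (T → ℝ) := {p | (∀ t, 0 ≤ p t) ∧ ∑ t, p t = 1}

/-- Behavioral strategies of player 1: `σ_t : (C×I)^{t−1} × C → Δ(I)`. -/
def IsStrat1 (σ : List (C × I) → C → (I → ℝ)) : Prop :=
  ∀ h c, σ h c ∈ Δ I

/-- Behavioral strategies of player 2: `τ_t : (D×J)^{t−1} × D → Δ(J)`. -/
def IsStrat2 (τ : List (D × J) → D → (J → ℝ)) : Prop :=
  ∀ h d, τ h d ∈ Δ J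

/-- The (finitely supported) joint distribution at time `t` of (current state, player 1's
past signals/actions and current signal, player 2's past signals/actions and current
signal), under `(π,σ,τ)`. -/
noncomputable def hist (q : K → I → J → (K × C × D → ℝ)) (π : K × C × D → ℝ)
    (σ : List (C × I) → C → (I → ℝ)) (τ : List (D × J) → D → (J → ℝ)) :
    ℕ → (K × (List (C × I) × C) × (List (D × J) × D) →₀ ℝ)
  | 0 => ∑ x : K × C × D,
      Finsupp.single (x.1, (([] : List (C × I)), x.2.1), (([] : List (D × J)), x.2.2)) (π x)
  | t + 1 => (hist q π σ τ t).sum fun st w =>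
      ∑ i, ∑ j, ∑ y : K × C × D,
        Finsupp.single
          (y.1, (st.2.1.1 ++ [(st.2.1.2, i)], y.2.1), (st.2.2.1 ++ [(st.2.2.2, j)], y.2.2))
          (w * σ st.2.1.1 st.2.1.2 i * τ st.2.2.1 st.2.2.2 j * q st.1 i j y)

/-- The expected payoff `E_{π,σ,τ}(g(k_{t+1}, i_{t+1}, j_{t+1}))` at stage `t+1`. -/
noncomputable def stagePay (q : K → I → J → (K × C × D → ℝ)) (g : K → I → J → ℝ)
    (π : K × C × D → ℝ) (σ : List (C × I) → C → (I → ℝ))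
    (τ : List (D × J) → D → (J → ℝ)) (t : ℕ) : ℝ :=
  (hist q π σ τ t).sum fun st w =>
    ∑ i, ∑ j, w * σ st.2.1.1 st.2.1.2 i * τ st.2.2.1 st.2.2.2 j * g st.1 i j

/-- An evaluation: a probability distribution `θ = (θ_t)_{t ≥ 1}` over stages
(indexed here by `t : ℕ`, `t` standing for stage `t+1`). -/
def IsEval (θ : ℕ → ℝ) : Prop := (∀ t, 0 ≤ θ t) ∧ ∑' t, θ t = 1

/-- The impatience `I(θ) = Σ_{t≥1} |θ_{t+1} − θ_t|`. -/
noncomputable def impatience (θ : ℕ → ℝ) : ℝ := ∑' t, |θ (t + 1) - θ t|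

/-- The `θ`-payoff `γ_θ(π,σ,τ) = E_{π,σ,τ}(Σ_t θ_t g(k_t,i_t,j_t))`. -/
noncomputable def payoff (q : K → I → J → (K × C × D → ℝ)) (g : K → I → J → ℝ)
    (π : K × C × D → ℝ) (θ : ℕ → ℝ) (σ : List (C × I) → C → (I → ℝ))
    (τ : List (D × J) → D → (J → ℝ)) : ℝ :=
  ∑' t, θ t * stagePay q g π σ τ t

/-- The lower value `max_σ min_τ γ_θ(π,σ,τ)`. -/
noncomputable def lowVal (q : K → I → J → (K × C × D → ℝ)) (g : K → I → J → ℝ)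
    (π : K × C × D → ℝ) (θ : ℕ → ℝ) : ℝ :=
  sSup {c : ℝ | ∃ σ, IsStrat1 σ ∧
    c = sInf {r : ℝ | ∃ τ, IsStrat2 τ ∧ r = payoff q g π θ σ τ}}

/-- The upper value `min_τ max_σ γ_θ(π,σ,τ)`. -/
noncomputable def upVal (q : K → I → J → (K × C × D → ℝ)) (g : K → I → J → ℝ)
    (π : K × C × D → ℝ) (θ : ℕ → ℝ) : ℝ :=
  sInf {c : ℝ | ∃ τ, IsStrat2 τ ∧
    c = sSup {r : ℝ | ∃ σ, IsStrat1 σ ∧ r = payoff q g π θ σ τ}}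

end Stmt19

/-!
Since player 2 does not influence the transitions, a strategy of player 1 matters only through its
*flow*: the unnormalized joint law of the state and of his action along each word of signals of
player 2. Flows form a convex compact set, and player 2 best replies to a flow stage by stage, so
the payoff guaranteed by a flow at each stage is concave and continuous in the flow.

Let `v` be the infimum over `n` of the best average payoff that a flow guarantees on a block of `n`
stages, the block starting anywhere. For player 2, the minimax theorem gives a strategy on each
block of a fixed length `n`, and these are played in turn, since player 1 gains no more than
`n * (v + ε)` on a block wherever it starts. For player 1, the value of the game played from the current
belief is homogeneous and nonexpansive in the belief. The distributions of beliefs are totally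
bounded as functionals on such functions, so beliefs which permit an average payoff `v` over a long
block are matched by beliefs reached within a bounded time, from which player 1 does as well for any
weights on the stages. A minimax argument over these weights then turns this into one flow that is
good on all windows of some length `N`. Finally, an evaluation `θ` is a mixture of averages over
windows of length `N`, up to an error of order `N * I(θ)`.
-/

namespace Stmt19

/-! ### Words and finitely supported measures -/

section Words

variable {A : Type*} [Fintype A]

/-- The finite set of words of length `t` over `A`; player 2's signals up to a stage form such a
word. -/
noncomputable def words (A : Type*) [Fintype A] (t : ℕ) : Finset (List A) :=
  (List.finite_length_eq A t).toFinset

@[simp] lemma mem_words {t : ℕ} {l : List A} : l ∈ words A t ↔ l.length = t := by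
  simp [words]

lemma sum_words_zero (f : List A → ℝ) : ∑ h ∈ words A 0, f h = f [] := by
  have : words A 0 = {[]} := by ext l; simp
  rw [this, Finset.sum_singleton]

lemma sum_words_add (t s : ℕ) (f : List A → ℝ) :
    ∑ h ∈ words A (t + s), f h = ∑ h ∈ words A t, ∑ h' ∈ words A s, f (h ++ h') := by
  rw [← Finset.sum_product']
  symm
  refine Finset.sum_nbij' (fun p => p.1 ++ p.2) (fun h => (h.take t, h.drop t)) ?_ ?_ ?_ ?_ ?_
  · rintro ⟨h, h'⟩ hh
    simp_all
  · intro h hh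
    simp_all
  · rintro ⟨h, h'⟩ hh
    simp only [Finset.mem_product, mem_words] at hh
    simp [← hh.1]
  · simp
  · simp

lemma sum_words_one (f : List A → ℝ) : ∑ h ∈ words A 1, f h = ∑ a, f [a] := by
  symm
  refine Finset.sum_bij (fun a _ => [a]) (by simp) (by simp) ?_ (by simp)
  intro l hl
  obtain ⟨a, rfl⟩ := List.length_eq_one_iff.1 (mem_words.1 hl)
  exact ⟨a, Finset.mem_univ a, rfl⟩

lemma sum_words_snoc (t : ℕ) (f : List A → ℝ) :
    ∑ h ∈ words A (t + 1), f h = ∑ h ∈ words A t, ∑ a, f (h ++ [a]) := by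
  rw [sum_words_add]
  exact Finset.sum_congr rfl fun h _ => sum_words_one _

lemma sum_words_cons (t : ℕ) (f : List A → ℝ) :
    ∑ h ∈ words A (t + 1), f h = ∑ a, ∑ h ∈ words A t, f (a :: h) := by
  rw [add_comm, sum_words_add, sum_words_one]
  rfl

end Words

section Expect

variable {α β : Type*}

/-- The integral of `f` against the finitely supported signed measure `μ`. It serves for laws of
histories, for evaluations with finitely many stages and for distributions of beliefs. -/
noncomputable def expect (μ : α →₀ ℝ) (f : α → ℝ) : ℝ := Finsupp.linearCombination ℝ f μ

lemma expect_eq_sum (μ : α →₀ ℝ) (f : α → ℝ) : expect μ f = μ.sum fun a w => w * f a := rfl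

lemma expect_single (a : α) (w : ℝ) (f : α → ℝ) : expect (Finsupp.single a w) f = w * f a :=
  Finsupp.linearCombination_single ℝ w a

lemma expect_sum {ι : Type*} (s : Finset ι) (μ : ι → α →₀ ℝ) (f : α → ℝ) :
    expect (∑ i ∈ s, μ i) f = ∑ i ∈ s, expect (μ i) f :=
  map_sum (Finsupp.linearCombination ℝ f) μ s

lemma expect_add (μ : α →₀ ℝ) (f f' : α → ℝ) :
    expect μ (fun a => f a + f' a) = expect μ f + expect μ f' := by
  simp only [expect_eq_sum, mul_add, Finsupp.sum_add]

lemma expect_finsetSum {ι : Type*} (s : Finset ι) (μ : α →₀ ℝ) (f : ι → α → ℝ) :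
    expect μ (fun a => ∑ i ∈ s, f i a) = ∑ i ∈ s, expect μ (f i) := by
  simp only [expect_eq_sum, Finset.mul_sum, Finsupp.sum]
  exact Finset.sum_comm

lemma expect_const_mul (μ : α →₀ ℝ) (c : ℝ) (f : α → ℝ) :
    expect μ (fun a => c * f a) = c * expect μ f := by
  simp only [expect_eq_sum, Finsupp.sum, Finset.mul_sum, mul_left_comm]

lemma expect_zero (μ : α →₀ ℝ) : expect μ (fun _ => 0) = 0 := by
  simp [expect_eq_sum]

lemma continuous_expect (μ : α →₀ ℝ) : Continuous (expect μ) :=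
  continuous_finsetSum _ fun a _ => continuous_const.mul (continuous_apply a)

lemma expect_congr {μ : α →₀ ℝ} {f f' : α → ℝ} (h : ∀ a ∈ μ.support, f a = f' a) :
    expect μ f = expect μ f' :=
  Finset.sum_congr rfl fun a ha => congrArg (μ a * ·) (h a ha)

lemma expect_mono {μ : α →₀ ℝ} (hμ : ∀ a, 0 ≤ μ a) {f f' : α → ℝ} (h : ∀ a, f a ≤ f' a) :
    expect μ f ≤ expect μ f' :=
  Finset.sum_le_sum fun a _ => mul_le_mul_of_nonneg_left (h a) (hμ a)

/-- A finitely supported probability, such as the law of the history at a given stage or an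
evaluation involving finitely many stages. -/
structure IsProb (μ : α →₀ ℝ) : Prop where
  nonneg : ∀ a, 0 ≤ μ a
  expect_one : expect μ (fun _ => 1) = 1

namespace IsProb

variable {μ : α →₀ ℝ} {f : α → ℝ} {c : ℝ}

lemma expect_const (hμ : IsProb μ) (c : ℝ) : expect μ (fun _ => c) = c := by
  simpa only [mul_one, hμ.expect_one] using expect_const_mul μ c fun _ => 1

lemma expect_le (hμ : IsProb μ) (h : ∀ a, f a ≤ c) : expect μ f ≤ c :=
  (expect_mono hμ.nonneg h).trans_eq (hμ.expect_const c)

lemma le_expect (hμ : IsProb μ) (h : ∀ a, c ≤ f a) : c ≤ expect μ f :=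
  (hμ.expect_const c).symm.trans_le (expect_mono hμ.nonneg h)

end IsProb

lemma isProb_sum_single {ι : Type*} (s : Finset ι) (x : ι → α) {w : ι → ℝ}
    (hw : ∀ i ∈ s, 0 ≤ w i) (hw1 : ∑ i ∈ s, w i = 1) :
    IsProb (∑ i ∈ s, Finsupp.single (x i) (w i)) := by
  classical
  refine ⟨fun a => ?_, by simpa only [expect_sum, expect_single, mul_one] using hw1⟩
  rw [Finsupp.finsetSum_apply]
  refine Finset.sum_nonneg fun i hi => ?_
  rw [Finsupp.single_apply]
  split_ifs
  exacts [hw i hi, le_rfl]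

lemma exists_of_mem_support_sum_single {ι : Type*} {s : Finset ι} {x : ι → α} {w : ι → ℝ} {a : α}
    (ha : a ∈ (∑ i ∈ s, Finsupp.single (x i) (w i)).support) : ∃ i ∈ s, w i ≠ 0 ∧ x i = a := by
  classical
  rw [Finsupp.mem_support_iff, Finsupp.finsetSum_apply] at ha
  obtain ⟨i, hi, hne⟩ := Finset.exists_ne_zero_of_sum_ne_zero ha
  rw [Finsupp.single_apply] at hne
  obtain ⟨hia, hwi⟩ := ite_ne_right_iff.1 hne
  exact ⟨i, hi, hwi, hia⟩

/-- The average of the first `n` terms of a sequence of finitely supported measures. -/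
noncomputable def average (n : ℕ) (μ : ℕ → α →₀ ℝ) : α →₀ ℝ :=
  (n : ℝ)⁻¹ • ∑ t ∈ Finset.range n, μ t

lemma expect_average (n : ℕ) (μ : ℕ → α →₀ ℝ) (f : α → ℝ) :
    expect (average n μ) f = (n : ℝ)⁻¹ * ∑ t ∈ Finset.range n, expect (μ t) f := by
  rw [average, expect, map_smul, smul_eq_mul]
  exact congrArg _ (expect_sum _ _ _)

lemma IsProb.average {μ : ℕ → α →₀ ℝ} (hμ : ∀ t, IsProb (μ t)) {n : ℕ} (hn : n ≠ 0) :
    IsProb (average n μ) where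
  nonneg a := by
    rw [Stmt19.average, Finsupp.smul_apply, Finsupp.finsetSum_apply]
    exact mul_nonneg (by positivity) (Finset.sum_nonneg fun t _ => (hμ t).nonneg a)
  expect_one := by
    simp only [expect_average, (hμ _).expect_one, Finset.sum_const, Finset.card_range,
      nsmul_eq_mul, mul_one]
    exact inv_mul_cancel₀ (Nat.cast_ne_zero.2 hn)

lemma exists_le_expect_of_le_expect_average {μ : ℕ → α →₀ ℝ} {f : α → ℝ} {n : ℕ}
    (hn : n ≠ 0) {c : ℝ} (h : c ≤ expect (average n μ) f) : ∃ t < n, c ≤ expect (μ t) f := by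
  rw [expect_average, le_inv_mul_iff₀ (by positivity)] at h
  obtain ⟨t, ht, hle⟩ := Finset.exists_le_of_sum_le (f := fun _ => c)
    (Finset.nonempty_range_iff.2 hn) (by simpa using h)
  exact ⟨t, Finset.mem_range.1 ht, hle⟩

/-- The mixture of the measures `ν i` with weights `ρ i`. -/
noncomputable def mixture (ρ : β →₀ ℝ) (ν : β → α →₀ ℝ) : α →₀ ℝ :=
  Finsupp.linearCombination ℝ ν ρ

lemma expect_mixture (ρ : β →₀ ℝ) (ν : β → α →₀ ℝ) (f : α → ℝ) :
    expect (mixture ρ ν) f = expect ρ fun i => expect (ν i) f := by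
  simp only [mixture, expect, Finsupp.linearCombination_apply, map_finsuppSum, map_smul]

lemma IsProb.mixture {ρ : β →₀ ℝ} (hρ : IsProb ρ) {ν : β → α →₀ ℝ} (hν : ∀ i, IsProb (ν i)) :
    IsProb (mixture ρ ν) where
  nonneg a := by
    rw [Stmt19.mixture, Finsupp.linearCombination_apply, Finsupp.sum, Finsupp.finsetSum_apply]
    exact Finset.sum_nonneg fun i _ => mul_nonneg (hρ.nonneg i) ((hν i).nonneg a)
  expect_one := by
    simp only [expect_mixture, (hν _).expect_one, hρ.expect_one]

lemma exists_of_mem_support_mixture {ρ : β →₀ ℝ} {ν : β → α →₀ ℝ} {a : α}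
    (ha : a ∈ (mixture ρ ν).support) : ∃ i ∈ ρ.support, a ∈ (ν i).support := by
  rw [mixture, Finsupp.linearCombination_apply, Finsupp.sum, Finsupp.mem_support_iff,
    Finsupp.finsetSum_apply] at ha
  obtain ⟨i, hi, hne⟩ := Finset.exists_ne_zero_of_sum_ne_zero ha
  exact ⟨i, hi, Finsupp.mem_support_iff.2 (right_ne_zero_of_mul hne)⟩

end Expect

/-! ### Flows -/

section Flow

variable {K I J D : Type*} [Fintype I]

/-- The unnormalized law of the state when `b` is an unnormalized joint law of the state and of the
action of player 1. -/
def belief (b : K → I → ℝ) : K → ℝ := fun k => ∑ i, b k i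

lemma belief_nonneg {b : K → I → ℝ} (hb : 0 ≤ b) : 0 ≤ belief b := fun k =>
  Finset.sum_nonneg fun i _ => hb k i

lemma belief_add (b b' : K → I → ℝ) : belief (b + b') = belief b + belief b' :=
  funext fun _ => Finset.sum_add_distrib

lemma belief_smul (c : ℝ) (b : K → I → ℝ) : belief (c • b) = c • belief b :=
  funext fun _ => (Finset.mul_sum _ _ _).symm

variable [Fintype K]

/-- The payoff of the joint law `b` of state and action of player 1 against the action `j`. -/
def actionPay (g : K → I → J → ℝ) (b : K → I → ℝ) (j : J) : ℝ := ∑ k, ∑ i, b k i * g k i j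

/-- The payoff of the joint law `b` against a best reply of player 2. -/
noncomputable def worstPay [Fintype J] [Nonempty J] (g : K → I → J → ℝ) (b : K → I → ℝ) : ℝ :=
  Finset.univ.inf' Finset.univ_nonempty (actionPay g b)

/-- The unnormalized law of the next state on the event that the next signal of player 2 is `d`.
Here `Q k i` is the law of the next state and signal of player 2, which does not depend on the
action of player 2. -/
def transport (Q : K → I → K × D → ℝ) (b : K → I → ℝ) (d : D) : K → ℝ :=
  fun k' => ∑ k, ∑ i, b k i * Q k i (k', d)

/-- A flow from `x`: `B h` is the unnormalized joint law of the state and of the action of player 1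
on the event that player 2 has received the word of signals `h`, when the state is initially
distributed as `x`. Flows encode the strategies of player 1 up to payoff equivalence. -/
structure IsFlow (Q : K → I → K × D → ℝ) (x : K → ℝ) (B : List D → K → I → ℝ) : Prop where
  nonneg : ∀ h, 0 ≤ B h
  root : belief (B []) = x
  step : ∀ h d, belief (B (h ++ [d])) = transport Q (B h) d

lemma actionPay_add (g : K → I → J → ℝ) (b b' : K → I → ℝ) (j : J) :
    actionPay g (b + b') j = actionPay g b j + actionPay g b' j := by
  simp only [actionPay, Pi.add_apply, add_mul, Finset.sum_add_distrib]

lemma actionPay_smul (g : K → I → J → ℝ) (c : ℝ) (b : K → I → ℝ) (j : J) :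
    actionPay g (c • b) j = c * actionPay g b j := by
  simp only [actionPay, Pi.smul_apply, smul_eq_mul, mul_assoc, Finset.mul_sum]

lemma actionPay_nonneg {g : K → I → J → ℝ} (hg : ∀ k i j, g k i j ∈ Icc (0 : ℝ) 1)
    {b : K → I → ℝ} (hb : 0 ≤ b) (j : J) : 0 ≤ actionPay g b j :=
  Finset.sum_nonneg fun k _ => Finset.sum_nonneg fun i _ => mul_nonneg (hb k i) (hg k i j).1

lemma actionPay_le_mass {g : K → I → J → ℝ} (hg : ∀ k i j, g k i j ∈ Icc (0 : ℝ) 1)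
    {b : K → I → ℝ} (hb : 0 ≤ b) (j : J) : actionPay g b j ≤ ∑ k, belief b k :=
  Finset.sum_le_sum fun k _ => Finset.sum_le_sum fun i _ =>
    mul_le_of_le_one_right (hb k i) (hg k i j).2

lemma transport_add (Q : K → I → K × D → ℝ) (b b' : K → I → ℝ) (d : D) :
    transport Q (b + b') d = transport Q b d + transport Q b' d := by
  funext k
  simp only [transport, Pi.add_apply, add_mul, Finset.sum_add_distrib]

lemma transport_smul (Q : K → I → K × D → ℝ) (c : ℝ) (b : K → I → ℝ) (d : D) :
    transport Q (c • b) d = c • transport Q b d := by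
  funext k
  simp only [transport, Pi.smul_apply, smul_eq_mul, mul_assoc, Finset.mul_sum]

lemma transport_nonneg {Q : K → I → K × D → ℝ} (hQ : ∀ k i y, 0 ≤ Q k i y) {b : K → I → ℝ}
    (hb : 0 ≤ b) (d : D) : 0 ≤ transport Q b d := fun _ =>
  Finset.sum_nonneg fun k _ => Finset.sum_nonneg fun i _ => mul_nonneg (hb k i) (hQ k i _)

lemma sum_transport_mul [Fintype D] (Q : K → I → K × D → ℝ) (b : K → I → ℝ)
    (f : K × D → ℝ) :
    ∑ d, ∑ k, transport Q b d k * f (k, d) = ∑ k, ∑ i, b k i * ∑ y, Q k i y * f y := by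
  rw [← Fintype.sum_prod_type_right' (fun k d => transport Q b d k * f (k, d))]
  simp only [transport, Finset.sum_mul, Finset.mul_sum, mul_assoc]
  rw [Finset.sum_comm]
  exact Finset.sum_congr rfl fun k _ => Finset.sum_comm

lemma sum_transport [Fintype D] {Q : K → I → K × D → ℝ} (hQ : ∀ k i, ∑ y, Q k i y = 1)
    (b : K → I → ℝ) : ∑ d, ∑ k, transport Q b d k = ∑ k, belief b k := by
  have h := sum_transport_mul Q b fun _ => 1
  simp only [mul_one, hQ] at h
  exact h

section WorstPay

variable [Fintype J] [Nonempty J]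

lemma worstPay_le (g : K → I → J → ℝ) (b : K → I → ℝ) (j : J) : worstPay g b ≤ actionPay g b j :=
  Finset.inf'_le _ (Finset.mem_univ j)

lemma le_worstPay {g : K → I → J → ℝ} {b : K → I → ℝ} {c : ℝ} (h : ∀ j, c ≤ actionPay g b j) :
    c ≤ worstPay g b :=
  Finset.le_inf' _ _ fun j _ => h j

lemma exists_worstPay_eq (g : K → I → J → ℝ) (b : K → I → ℝ) :
    ∃ j, worstPay g b = actionPay g b j := by
  obtain ⟨j, -, hj⟩ := Finset.exists_mem_eq_inf' Finset.univ_nonempty (actionPay g b)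
  exact ⟨j, hj⟩

lemma add_worstPay_le (g : K → I → J → ℝ) (b b' : K → I → ℝ) :
    worstPay g b + worstPay g b' ≤ worstPay g (b + b') :=
  le_worstPay fun j => by
    rw [actionPay_add]
    exact add_le_add (worstPay_le g b j) (worstPay_le g b' j)

lemma mul_worstPay_le (g : K → I → J → ℝ) {c : ℝ} (hc : 0 ≤ c) (b : K → I → ℝ) :
    c * worstPay g b ≤ worstPay g (c • b) :=
  le_worstPay fun j => by
    rw [actionPay_smul]
    exact mul_le_mul_of_nonneg_left (worstPay_le g b j) hc

lemma worstPay_nonneg {g : K → I → J → ℝ} (hg : ∀ k i j, g k i j ∈ Icc (0 : ℝ) 1)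
    {b : K → I → ℝ} (hb : 0 ≤ b) : 0 ≤ worstPay g b :=
  le_worstPay fun j => actionPay_nonneg hg hb j

lemma worstPay_add_le {g : K → I → J → ℝ} (hg : ∀ k i j, g k i j ∈ Icc (0 : ℝ) 1)
    (b : K → I → ℝ) {b' : K → I → ℝ} (hb' : 0 ≤ b') :
    worstPay g (b + b') ≤ worstPay g b + ∑ k, belief b' k := by
  obtain ⟨j, hj⟩ := exists_worstPay_eq g b
  rw [hj]
  refine (worstPay_le g _ j).trans ?_
  rw [actionPay_add]
  gcongr
  exact actionPay_le_mass hg hb' j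

lemma continuous_worstPay (g : K → I → J → ℝ) : Continuous (worstPay g) := by
  refine Continuous.finset_inf'_apply _ fun j _ => ?_
  unfold actionPay
  fun_prop

end WorstPay

/-- The flow that follows `B` for `t` stages and, if player 2 has then received the word `h`,
continues with `C h`. -/
def concatFlow (t : ℕ) (B : List D → K → I → ℝ) (C : List D → List D → K → I → ℝ) :
    List D → K → I → ℝ :=
  fun h => if h.length < t then B h else C (h.take t) (h.drop t)

namespace IsFlow

variable {Q : K → I → K × D → ℝ} {x y : K → ℝ} {B B' : List D → K → I → ℝ}

lemma append (hB : IsFlow Q x B) (l : List D) :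
    IsFlow Q (belief (B l)) (fun h => B (l ++ h)) where
  nonneg h := hB.nonneg (l ++ h)
  root := by rw [List.append_nil]
  step h d := by rw [← List.append_assoc, hB.step]

lemma cons (hB : IsFlow Q x B) (d : D) :
    IsFlow Q (transport Q (B []) d) (fun h => B (d :: h)) := by
  rw [← hB.step]
  exact hB.append [d]

lemma add (hB : IsFlow Q x B) (hB' : IsFlow Q y B') : IsFlow Q (x + y) (B + B') where
  nonneg h := add_nonneg (hB.nonneg h) (hB'.nonneg h)
  root := by rw [Pi.add_apply, belief_add, hB.root, hB'.root]
  step h d := by simp only [Pi.add_apply, belief_add, transport_add, hB.step, hB'.step]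

lemma smul (hB : IsFlow Q x B) {c : ℝ} (hc : 0 ≤ c) : IsFlow Q (c • x) (c • B) where
  nonneg h := smul_nonneg hc (hB.nonneg h)
  root := by rw [Pi.smul_apply, belief_smul, hB.root]
  step h d := by simp only [Pi.smul_apply, belief_smul, transport_smul, hB.step]

lemma sum_belief [Fintype D] (hQ : ∀ k i, ∑ y, Q k i y = 1) (hB : IsFlow Q x B) (t : ℕ) :
    ∑ h ∈ words D t, ∑ k, belief (B h) k = ∑ k, x k := by
  induction t with
  | zero => rw [sum_words_zero, hB.root]
  | succ t ih =>
    rw [sum_words_snoc, ← ih]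
    simp only [hB.step, sum_transport hQ]

lemma apply_le [Fintype D] (hQ : ∀ k i, ∑ y, Q k i y = 1) (hB : IsFlow Q x B) (h : List D)
    (k : K) (i : I) : B h k i ≤ ∑ k, x k := by
  have hb := fun h => belief_nonneg (hB.nonneg h)
  calc B h k i ≤ belief (B h) k :=
        Finset.single_le_sum (fun i _ => hB.nonneg h k i) (Finset.mem_univ i)
    _ ≤ ∑ k, belief (B h) k := Finset.single_le_sum (fun k _ => hb h k) (Finset.mem_univ k)
    _ ≤ ∑ h ∈ words D h.length, ∑ k, belief (B h) k :=
        Finset.single_le_sum (f := fun h => ∑ k, belief (B h) k)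
          (fun h _ => Finset.sum_nonneg fun k _ => hb h k) (mem_words.2 rfl)
    _ = ∑ k, x k := hB.sum_belief hQ _

lemma concat (hB : IsFlow Q x B) {C : List D → List D → K → I → ℝ}
    (hC : ∀ h, IsFlow Q (belief (B h)) (C h)) (t : ℕ) :
    IsFlow Q x (concatFlow t B C) where
  nonneg h := by
    unfold concatFlow
    split_ifs
    exacts [hB.nonneg h, (hC _).nonneg _]
  root := by
    unfold concatFlow
    split_ifs
    · exact hB.root
    · rw [List.take_nil, List.drop_nil, (hC []).root, hB.root]
  step h d := by
    unfold concatFlow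
    rcases lt_trichotomy (h.length + 1) t with hlt | heq | hgt
    · simp only [List.length_append, List.length_singleton, hlt, if_true,
        (Nat.lt_succ_self _).trans hlt, hB.step]
    · have hh : (h ++ [d]).length = t := by simpa using heq
      rw [if_neg hh.not_lt, if_pos (by lia), List.take_of_length_le hh.le,
        List.drop_of_length_le hh.le, (hC _).root, hB.step]
    · rw [if_neg (by simp; lia), if_neg (by lia), List.take_append_of_le_length (by lia),
        List.drop_append_of_le_length (by lia), (hC _).step]

end IsFlow

end Flow

section Policy

variable {K I D : Type*} [Fintype I]

open Classical in
/-- The behavior of player 1 in the state `k` under the joint law `b`: the conditional law of his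
action given `k`, or an arbitrary point mass if `k` has weight zero. -/
noncomputable def policyOf [Nonempty I] (b : K → I → ℝ) (k : K) : I → ℝ :=
  if belief b k = 0 then Pi.single (Classical.arbitrary I) 1 else (belief b k)⁻¹ • b k

lemma policyOf_mem_Δ [Nonempty I] {b : K → I → ℝ} (hb : 0 ≤ b) (k : K) : policyOf b k ∈ Δ I := by
  classical
  unfold policyOf
  split_ifs with h
  · exact single_mem_stdSimplex ℝ _
  · refine ⟨fun i => mul_nonneg (inv_nonneg.2 (belief_nonneg hb k)) (hb k i), ?_⟩
    simp only [Pi.smul_apply, smul_eq_mul, ← Finset.mul_sum]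
    exact inv_mul_cancel₀ h

lemma belief_mul_policyOf [Nonempty I] {b : K → I → ℝ} (hb : 0 ≤ b) (k : K) (i : I) :
    belief b k * policyOf b k i = b k i := by
  unfold policyOf
  split_ifs with h
  · have hbk := (Finset.sum_eq_zero_iff_of_nonneg fun i _ => hb k i).1 h i (Finset.mem_univ i)
    rw [h, zero_mul, hbk]
  · exact mul_inv_cancel_left₀ h _

variable [Fintype K]

/-- The flow from `x` generated by the behavior `s` of player 1, where `s h k` is the law of his
action in the state `k` when player 2 has received the word `h`. -/
def policyFlow (Q : K → I → K × D → ℝ) :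
    (List D → K → I → ℝ) → (K → ℝ) → List D → K → I → ℝ
  | s, x, [] => fun k i => x k * s [] k i
  | s, x, d :: h =>
    policyFlow Q (fun h => s (d :: h)) (transport Q (fun k i => x k * s [] k i) d) h

lemma isFlow_policyFlow {Q : K → I → K × D → ℝ} (hQ : ∀ k i y, 0 ≤ Q k i y)
    {s : List D → K → I → ℝ} (hs : ∀ h k, s h k ∈ Δ I) {x : K → ℝ} (hx : 0 ≤ x) :
    IsFlow Q x (policyFlow Q s x) := by
  have hroot : ∀ (s : List D → K → I → ℝ) (x : K → ℝ), (∀ h k, s h k ∈ Δ I) →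
      belief (policyFlow Q s x []) = x := fun s x hs => by
    funext k
    simp only [belief, policyFlow, ← Finset.mul_sum, (hs [] k).2, mul_one]
  have hnonneg : ∀ {s : List D → K → I → ℝ} {x : K → ℝ}, (∀ h k, s h k ∈ Δ I) → 0 ≤ x →
      0 ≤ fun k i => x k * s [] k i := fun hs hx k i => mul_nonneg (hx k) ((hs [] k).1 i)
  refine ⟨fun h => ?_, hroot s x hs, fun h d => ?_⟩
  · induction h generalizing s x with
    | nil => exact hnonneg hs hx
    | cons d _ ih => exact ih (fun h => hs (d :: h)) (transport_nonneg hQ (hnonneg hs hx) d)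
  · induction h generalizing s x with
    | nil => exact hroot _ _ fun h => hs (d :: h)
    | cons d' _ ih => exact ih (fun h => hs (d' :: h)) (transport_nonneg hQ (hnonneg hs hx) d')

lemma exists_isFlow [Nonempty I] {Q : K → I → K × D → ℝ} (hQ : ∀ k i y, 0 ≤ Q k i y)
    {x : K → ℝ} (hx : 0 ≤ x) : ∃ B, IsFlow Q x B := by
  classical
  exact ⟨_, isFlow_policyFlow hQ (fun _ _ => single_mem_stdSimplex ℝ (Classical.arbitrary I)) hx⟩

lemma policyFlow_add (Q : K → I → K × D → ℝ) (s : List D → K → I → ℝ) (x y : K → ℝ) :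
    policyFlow Q s (x + y) = policyFlow Q s x + policyFlow Q s y := by
  have hadd : ∀ (s : List D → K → I → ℝ) (x y : K → ℝ), (fun k i => (x + y) k * s [] k i) =
      (fun k i => x k * s [] k i) + fun k i => y k * s [] k i :=
    fun s x y => funext fun k => funext fun i => add_mul _ _ _
  funext h
  induction h generalizing s x y with
  | nil => exact hadd s x y
  | cons d h ih =>
    rw [Pi.add_apply, policyFlow, policyFlow, policyFlow, hadd, transport_add, ih, Pi.add_apply]

lemma IsFlow.eq_policyFlow [Nonempty I] {Q : K → I → K × D → ℝ} {x : K → ℝ}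
    {B : List D → K → I → ℝ} (hB : IsFlow Q x B) :
    B = policyFlow Q (fun h => policyOf (B h)) x := by
  have hroot : ∀ {x : K → ℝ} {B : List D → K → I → ℝ}, IsFlow Q x B →
      (fun k i => x k * policyOf (B []) k i) = B [] := fun hB => by
    funext k i
    rw [← hB.root, belief_mul_policyOf (hB.nonneg [])]
  funext h
  induction h generalizing x B with
  | nil => exact (hroot hB).symm
  | cons d h ih => rw [policyFlow, hroot hB, ← ih (hB.cons d)]

lemma IsFlow.exists_add [Nonempty I] {Q : K → I → K × D → ℝ} (hQ : ∀ k i y, 0 ≤ Q k i y)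
    {u w : K → ℝ} (hu : 0 ≤ u) (hw : 0 ≤ w) {B : List D → K → I → ℝ}
    (hB : IsFlow Q (u + w) B) :
    ∃ Bu Bw, IsFlow Q u Bu ∧ IsFlow Q w Bw ∧ B = Bu + Bw := by
  have hs : ∀ h k, policyOf (B h) k ∈ Δ I := fun h => policyOf_mem_Δ (hB.nonneg h)
  refine ⟨_, _, isFlow_policyFlow hQ hs hu, isFlow_policyFlow hQ hs hw, ?_⟩
  rw [← policyFlow_add, ← hB.eq_policyFlow]

end Policy

section Guarantee

variable {K I J D : Type*} [Fintype K] [Fintype I] [Fintype J] [Fintype D] [Nonempty J]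

/-- The payoff at stage `t` along the flow `B` when player 2 best replies at that stage. As he does
not influence the transitions, stagewise best replies are best replies in the repeated game. -/
noncomputable def stageGuarantee (g : K → I → J → ℝ) (t : ℕ) (B : List D → K → I → ℝ) : ℝ :=
  ∑ h ∈ words D t, worstPay g (B h)

lemma add_stageGuarantee_le (g : K → I → J → ℝ) (t : ℕ) (B B' : List D → K → I → ℝ) :
    stageGuarantee g t B + stageGuarantee g t B' ≤ stageGuarantee g t (B + B') := by
  unfold stageGuarantee
  rw [← Finset.sum_add_distrib]
  exact Finset.sum_le_sum fun h _ => add_worstPay_le g _ _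

lemma mul_stageGuarantee_le (g : K → I → J → ℝ) (t : ℕ) {c : ℝ} (hc : 0 ≤ c)
    (B : List D → K → I → ℝ) : c * stageGuarantee g t B ≤ stageGuarantee g t (c • B) := by
  unfold stageGuarantee
  rw [Finset.mul_sum]
  exact Finset.sum_le_sum fun h _ => mul_worstPay_le g hc _

lemma stageGuarantee_add (g : K → I → J → ℝ) (t s : ℕ) (B : List D → K → I → ℝ) :
    stageGuarantee g (t + s) B =
      ∑ h ∈ words D t, stageGuarantee g s (fun h' => B (h ++ h')) :=
  sum_words_add t s _

lemma stageGuarantee_concatFlow (g : K → I → J → ℝ) (t s : ℕ) (B : List D → K → I → ℝ)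
    (C : List D → List D → K → I → ℝ) :
    stageGuarantee g (t + s) (concatFlow t B C) = ∑ h ∈ words D t, stageGuarantee g s (C h) := by
  rw [stageGuarantee_add]
  refine Finset.sum_congr rfl fun h hh => ?_
  rw [mem_words] at hh
  simp [concatFlow, ← hh]

lemma continuous_stageGuarantee (g : K → I → J → ℝ) (t : ℕ) :
    Continuous fun B : List D → K → I → ℝ => stageGuarantee g t B :=
  continuous_finsetSum _ fun h _ => (continuous_worstPay g).comp (continuous_apply h)

namespace IsFlow

variable {Q : K → I → K × D → ℝ} {g : K → I → J → ℝ} {x : K → ℝ} {B : List D → K → I → ℝ}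

lemma stageGuarantee_nonneg (hg : ∀ k i j, g k i j ∈ Icc (0 : ℝ) 1) (hB : IsFlow Q x B)
    (t : ℕ) : 0 ≤ stageGuarantee g t B :=
  Finset.sum_nonneg fun h _ => worstPay_nonneg hg (hB.nonneg h)

lemma stageGuarantee_add_le (hQ : ∀ k i, ∑ y, Q k i y = 1)
    (hg : ∀ k i j, g k i j ∈ Icc (0 : ℝ) 1) (hB : IsFlow Q x B) (t : ℕ)
    (B' : List D → K → I → ℝ) :
    stageGuarantee g t (B' + B) ≤ stageGuarantee g t B' + ∑ k, x k := by
  rw [← hB.sum_belief hQ t, stageGuarantee, stageGuarantee, ← Finset.sum_add_distrib]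
  exact Finset.sum_le_sum fun h _ => worstPay_add_le hg _ (hB.nonneg h)

lemma stageGuarantee_le (hQ : ∀ k i, ∑ y, Q k i y = 1)
    (hg : ∀ k i j, g k i j ∈ Icc (0 : ℝ) 1) (hB : IsFlow Q x B) (t : ℕ) :
    stageGuarantee g t B ≤ ∑ k, x k := by
  rw [← hB.sum_belief hQ t]
  refine Finset.sum_le_sum fun h _ => ?_
  obtain ⟨j⟩ := ‹Nonempty J›
  exact (worstPay_le g _ j).trans (actionPay_le_mass hg (hB.nonneg h) j)

end IsFlow

end Guarantee

/-! ### Minimax theorems -/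

section Minimax

variable {E : Type*} [AddCommGroup E] [Module ℝ E] {Y : Set E}

lemma concaveOn_finsetSum {ι : Type*} (s : Finset ι) (cY : Convex ℝ Y) {A : ι → E → ℝ}
    (hA : ∀ i ∈ s, ConcaveOn ℝ Y (A i)) : ConcaveOn ℝ Y fun y => ∑ i ∈ s, A i y := by
  refine ⟨cY, fun y hy y' hy' a b ha hb hab => ?_⟩
  simp only [Finset.smul_sum, ← Finset.sum_add_distrib]
  exact Finset.sum_le_sum fun i hi => (hA i hi).2 hy hy' ha hb hab

lemma concaveOn_expect {ι : Type*} {w : ι →₀ ℝ} (hw : ∀ i, 0 ≤ w i) (cY : Convex ℝ Y)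
    {A : ι → E → ℝ} (hA : ∀ i, ConcaveOn ℝ Y (A i)) :
    ConcaveOn ℝ Y fun y => expect w fun i => A i y :=
  concaveOn_finsetSum _ cY fun i _ => (hA i).smul (hw i)

variable [TopologicalSpace E] [IsTopologicalAddGroup E] [ContinuousSMul ℝ E]

lemma exists_forall_le_of_forall_mem_Δ {ι : Type*} [Fintype ι] [Nonempty ι] (neY : Y.Nonempty)
    (kY : IsCompact Y) (cY : Convex ℝ Y) {A : ι → E → ℝ} (hA : ∀ i, Continuous (A i))
    (hA' : ∀ i, ConcaveOn ℝ Y (A i)) {c : ℝ}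
    (h : ∀ ρ ∈ Δ ι, ∃ y ∈ Y, c ≤ ∑ i, ρ i * A i y) : ∃ y ∈ Y, ∀ i, c ≤ A i y := by
  classical
  have hconvex : ∀ y ∈ Y, QuasiconvexOn ℝ (Δ ι) fun ρ => ∑ i, ρ i * A i y := fun y _ =>
    ConvexOn.quasiconvexOn ⟨convex_stdSimplex ℝ ι, fun ρ _ ρ' _ a b _ _ _ => le_of_eq <| by
      simp only [Pi.add_apply, Pi.smul_apply, smul_eq_mul, Finset.mul_sum, add_mul, mul_assoc,
        Finset.sum_add_distrib]⟩
  have hconcave : ∀ ρ ∈ Δ ι, QuasiconcaveOn ℝ Y fun y => ∑ i, ρ i * A i y := fun ρ hρ =>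
    (concaveOn_finsetSum _ cY fun i _ => (hA' i).smul (hρ.1 i)).quasiconcaveOn
  obtain ⟨ρ, hρ, y, hy, hsaddle⟩ := Sion.exists_isSaddlePointOn (X := Δ ι) (Y := Y)
    (f := fun ρ y => ∑ i, ρ i * A i y)
    ⟨_, single_mem_stdSimplex ℝ (Classical.arbitrary ι)⟩
    (convex_stdSimplex ℝ ι) (isCompact_stdSimplex ℝ ι)
    (fun y _ => (by fun_prop : Continuous _).lowerSemicontinuous.lowerSemicontinuousOn _) hconvex
    cY neY kY
    (fun ρ _ => (by fun_prop : Continuous _).upperSemicontinuous.upperSemicontinuousOn _) hconcave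
  obtain ⟨y₀, hy₀, hc⟩ := h ρ hρ
  refine ⟨y, hy, fun i => hc.trans ?_⟩
  simpa [Pi.single_apply] using hsaddle _ (single_mem_stdSimplex ℝ i) y₀ hy₀

lemma exists_forall_le_of_forall_isProb {ι : Type*} (neY : Y.Nonempty)
    (kY : IsCompact Y) (cY : Convex ℝ Y) {A : ι → E → ℝ} (hA : ∀ i, Continuous (A i))
    (hA' : ∀ i, ConcaveOn ℝ Y (A i)) {c : ℝ}
    (h : ∀ ρ : ι →₀ ℝ, IsProb ρ → ∃ y ∈ Y, c ≤ expect ρ fun i => A i y) :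
    ∃ y ∈ Y, ∀ i, c ≤ A i y := by
  have hfinite : ∀ s : Finset ι, (Y ∩ ⋂ i ∈ s, {y | c ≤ A i y}).Nonempty := by
    intro s
    rcases s.eq_empty_or_nonempty with rfl | hs
    · simpa using neY
    have := hs.to_subtype
    obtain ⟨y, hy, hys⟩ := exists_forall_le_of_forall_mem_Δ (ι := s) neY kY cY
      (fun i => hA i) (fun i => hA' i) (c := c) fun ρ hρ => by
        simpa only [expect_sum, expect_single] using
          h (∑ i, Finsupp.single i.1 (ρ i))
            (isProb_sum_single _ Subtype.val (fun i _ => hρ.1 i) hρ.2)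
    exact ⟨y, hy, mem_iInter₂.2 fun i hi => hys ⟨i, hi⟩⟩
  obtain ⟨y, hy, hyA⟩ := kY.inter_iInter_nonempty (fun i => {y | c ≤ A i y})
    (fun i => isClosed_le continuous_const (hA i)) hfinite
  exact ⟨y, hy, mem_iInter.1 hyA⟩

end Minimax

section Family

variable {K I J D : Type*} [Fintype K] [Fintype I]

/-- Families of flows indexed by the first signal of player 2, where `ξ` is the law of the first
state and signal. They encode the strategies of player 1 in the whole game. -/
def flowFamily (Q : K → I → K × D → ℝ) (ξ : K × D → ℝ) : Set (D → List D → K → I → ℝ) :=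
  Set.univ.pi fun d => {B | IsFlow Q (fun k => ξ (k, d)) B}

lemma mem_flowFamily {Q : K → I → K × D → ℝ} {ξ : K × D → ℝ} {B : D → List D → K → I → ℝ} :
    B ∈ flowFamily Q ξ ↔ ∀ d, IsFlow Q (fun k => ξ (k, d)) (B d) :=
  mem_univ_pi

lemma flowFamily_nonempty [Nonempty I] {Q : K → I → K × D → ℝ} (hQ : ∀ k i y, 0 ≤ Q k i y)
    {ξ : K × D → ℝ} (hξ : 0 ≤ ξ) : (flowFamily Q ξ).Nonempty :=
  univ_pi_nonempty_iff.2 fun d => exists_isFlow hQ fun k => hξ (k, d)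

lemma convex_isFlow (Q : K → I → K × D → ℝ) (x : K → ℝ) : Convex ℝ {B | IsFlow Q x B} := by
  intro B hB B' hB' a b ha hb hab
  have h := (IsFlow.smul hB ha).add (IsFlow.smul hB' hb)
  rwa [← add_smul, hab, one_smul] at h

lemma convex_flowFamily (Q : K → I → K × D → ℝ) (ξ : K × D → ℝ) : Convex ℝ (flowFamily Q ξ) :=
  convex_pi fun _ _ => convex_isFlow Q _

lemma isClosed_isFlow (Q : K → I → K × D → ℝ) (x : K → ℝ) : IsClosed {B | IsFlow Q x B} := by
  have hset : {B | IsFlow Q x B} = (⋂ h : List D, {B | 0 ≤ B h}) ∩ {B | belief (B []) = x} ∩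
      ⋂ (h : List D) (d : D), {B | belief (B (h ++ [d])) = transport Q (B h) d} := by
    ext B
    simp only [mem_inter_iff, mem_iInter, mem_ofPred_eq]
    exact ⟨fun hB => ⟨⟨hB.nonneg, hB.root⟩, hB.step⟩, fun hB => ⟨hB.1.1, hB.1.2, hB.2⟩⟩
  have hbelief : ∀ h : List D, Continuous fun B : List D → K → I → ℝ => belief (B h) := fun h => by
    unfold belief
    fun_prop
  have htransport : ∀ (h : List D) (d : D),
      Continuous fun B : List D → K → I → ℝ => transport Q (B h) d := fun h d => by
    unfold transport
    fun_prop
  rw [hset]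
  exact ((isClosed_iInter fun h => isClosed_le continuous_const (continuous_apply h)).inter
    (isClosed_eq (hbelief []) continuous_const)).inter
    (isClosed_iInter fun h => isClosed_iInter fun d => isClosed_eq (hbelief _) (htransport h d))

variable [Fintype D]

lemma isCompact_isFlow {Q : K → I → K × D → ℝ} (hQ : ∀ k i, ∑ y, Q k i y = 1) (x : K → ℝ) :
    IsCompact {B | IsFlow Q x B} := by
  have hbox : IsCompact (Set.univ.pi fun _ : List D => Set.univ.pi fun _ : K =>
      Set.univ.pi fun _ : I => Icc (0 : ℝ) (∑ k, x k)) :=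
    isCompact_univ_pi fun _ => isCompact_univ_pi fun _ => isCompact_univ_pi fun _ => isCompact_Icc
  exact hbox.of_isClosed_subset (isClosed_isFlow Q x) fun B hB h _ k _ i _ =>
    ⟨hB.nonneg h k i, hB.apply_le hQ h k i⟩

lemma isCompact_flowFamily {Q : K → I → K × D → ℝ} (hQ : ∀ k i, ∑ y, Q k i y = 1)
    (ξ : K × D → ℝ) : IsCompact (flowFamily Q ξ) :=
  isCompact_univ_pi fun _ => isCompact_isFlow hQ _

variable [Fintype J]

section FamilyGuarantee

variable [Nonempty J]

/-- The payoff at stage `t` of a family of flows when player 2 best replies at that stage. -/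
noncomputable def familyGuarantee (g : K → I → J → ℝ) (t : ℕ) (B : D → List D → K → I → ℝ) : ℝ :=
  ∑ d, stageGuarantee g t (B d)

lemma continuous_familyGuarantee (g : K → I → J → ℝ) (t : ℕ) :
    Continuous fun B : D → List D → K → I → ℝ => familyGuarantee g t B :=
  continuous_finsetSum _ fun d _ => (continuous_stageGuarantee g t).comp (continuous_apply d)

lemma concaveOn_familyGuarantee (g : K → I → J → ℝ) (t : ℕ) (Q : K → I → K × D → ℝ)
    (ξ : K × D → ℝ) : ConcaveOn ℝ (flowFamily Q ξ) (familyGuarantee g t) := by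
  refine ⟨convex_flowFamily Q ξ, fun B _ B' _ a b ha hb _ => ?_⟩
  simp only [familyGuarantee, smul_eq_mul, Finset.mul_sum, ← Finset.sum_add_distrib]
  exact Finset.sum_le_sum fun d _ =>
    (add_le_add (mul_stageGuarantee_le g t ha (B d)) (mul_stageGuarantee_le g t hb (B' d))).trans
      (add_stageGuarantee_le g t _ _)

lemma familyGuarantee_mem_Icc {Q : K → I → K × D → ℝ} (hQ : ∀ k i, ∑ y, Q k i y = 1)
    {g : K → I → J → ℝ} (hg : ∀ k i j, g k i j ∈ Icc (0 : ℝ) 1) {ξ : K × D → ℝ}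
    (hξ : ∑ y, ξ y = 1) {B : D → List D → K → I → ℝ} (hB : B ∈ flowFamily Q ξ) (t : ℕ) :
    familyGuarantee g t B ∈ Icc (0 : ℝ) 1 := by
  rw [mem_flowFamily] at hB
  refine ⟨Finset.sum_nonneg fun d _ => (hB d).stageGuarantee_nonneg hg t, ?_⟩
  rw [← hξ, Fintype.sum_prod_type_right]
  exact Finset.sum_le_sum fun d _ => (hB d).stageGuarantee_le hQ hg t

end FamilyGuarantee

/-- The payoff at stage `t` of a family of flows against the strategy `τ` of player 2, which
depends on his signals only; the first signal is the head of the word given to `τ`. -/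
noncomputable def familyPay (g : K → I → J → ℝ) (t : ℕ) (B : D → List D → K → I → ℝ)
    (τ : List D → J → ℝ) : ℝ :=
  ∑ d, ∑ h ∈ words D t, ∑ j, τ (d :: h) j * actionPay g (B d h) j

lemma familyPay_nonneg {Q : K → I → K × D → ℝ} {g : K → I → J → ℝ}
    (hg : ∀ k i j, g k i j ∈ Icc (0 : ℝ) 1) {ξ : K × D → ℝ} {B : D → List D → K → I → ℝ}
    (hB : B ∈ flowFamily Q ξ) {τ : List D → J → ℝ} (hτ : ∀ l, τ l ∈ Δ J) (t : ℕ) :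
    0 ≤ familyPay g t B τ :=
  Finset.sum_nonneg fun d _ => Finset.sum_nonneg fun h _ => Finset.sum_nonneg fun j _ =>
    mul_nonneg ((hτ _).1 j) (actionPay_nonneg hg ((mem_flowFamily.1 hB d).nonneg h) j)

lemma familyPay_congr (g : K → I → J → ℝ) (t : ℕ) (B : D → List D → K → I → ℝ)
    {τ τ' : List D → J → ℝ} (h : ∀ l, l.length = t + 1 → τ l = τ' l) :
    familyPay g t B τ = familyPay g t B τ' :=
  Finset.sum_congr rfl fun d _ => Finset.sum_congr rfl fun l hl => by
    rw [h (d :: l) (congrArg (· + 1) (mem_words.1 hl))]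

lemma familyPay_combo_left (g : K → I → J → ℝ) (t : ℕ) (B B' : D → List D → K → I → ℝ)
    (τ : List D → J → ℝ) (a b : ℝ) :
    familyPay g t (a • B + b • B') τ = a * familyPay g t B τ + b * familyPay g t B' τ := by
  simp only [familyPay, Pi.add_apply, Pi.smul_apply, actionPay_add, actionPay_smul, mul_add,
    Finset.sum_add_distrib, Finset.mul_sum, mul_left_comm]

lemma familyPay_combo_right (g : K → I → J → ℝ) (t : ℕ) (B : D → List D → K → I → ℝ)
    (τ τ' : List D → J → ℝ) (a b : ℝ) :
    familyPay g t B (a • τ + b • τ') = a * familyPay g t B τ + b * familyPay g t B τ' := by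
  simp only [familyPay, Pi.add_apply, Pi.smul_apply, smul_eq_mul, add_mul, mul_assoc,
    Finset.sum_add_distrib, Finset.mul_sum]

lemma exists_familyPay_eq_familyGuarantee [Nonempty J] (g : K → I → J → ℝ)
    (B : D → List D → K → I → ℝ) :
    ∃ τ : List D → J → ℝ, (∀ l, τ l ∈ Δ J) ∧ ∀ t, familyPay g t B τ = familyGuarantee g t B := by
  classical
  choose reply hreply using fun b : K → I → ℝ => exists_worstPay_eq g b
  refine ⟨fun l => Pi.single (l.casesOn (Classical.arbitrary J) fun d h => reply (B d h)) 1,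
    fun l => single_mem_stdSimplex ℝ _, fun t => ?_⟩
  simp [familyPay, familyGuarantee, stageGuarantee, hreply, Pi.single_apply]

lemma exists_forall_familyPay_le [Nonempty I] [Nonempty J] {Q : K → I → K × D → ℝ}
    (hQ : ∀ k i, Q k i ∈ Δ (K × D)) (g : K → I → J → ℝ) {ξ : K × D → ℝ} (hξ : 0 ≤ ξ)
    (s : Finset ℕ) {c : ℝ}
    (h : ∀ B ∈ flowFamily Q ξ, ∑ t ∈ s, familyGuarantee g t B ≤ c) :
    ∃ τ : List D → J → ℝ, (∀ l, τ l ∈ Δ J) ∧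
      ∀ B ∈ flowFamily Q ξ, ∑ t ∈ s, familyPay g t B τ ≤ c := by
  classical
  let X : Set (List D → J → ℝ) := Set.univ.pi fun _ => Δ J
  have hX : Convex ℝ X := convex_pi fun _ _ => convex_stdSimplex ℝ J
  have hY := convex_flowFamily Q ξ
  obtain ⟨τ, hτ, B, hB, hsaddle⟩ := Sion.exists_isSaddlePointOn (X := X) (Y := flowFamily Q ξ)
    (f := fun τ B => ∑ t ∈ s, familyPay g t B τ)
    ⟨fun _ => Pi.single (Classical.arbitrary J) 1, fun _ _ => single_mem_stdSimplex ℝ _⟩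
    hX (isCompact_univ_pi fun _ => isCompact_stdSimplex ℝ J)
    (fun B _ => Continuous.lowerSemicontinuous (by unfold familyPay; fun_prop)
      |>.lowerSemicontinuousOn _)
    (fun B _ => ConvexOn.quasiconvexOn ⟨hX, fun τ _ τ' _ a b _ _ _ => by
      simp only [familyPay_combo_right, Finset.sum_add_distrib, ← Finset.mul_sum]
      exact le_rfl⟩)
    hY (flowFamily_nonempty (fun k i => (hQ k i).1) hξ)
    (isCompact_flowFamily (fun k i => (hQ k i).2) ξ)
    (fun τ _ => Continuous.upperSemicontinuous (by unfold familyPay actionPay; fun_prop)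
      |>.upperSemicontinuousOn _)
    (fun τ _ => ConcaveOn.quasiconcaveOn ⟨hY, fun B _ B' _ a b _ _ _ => by
      simp only [familyPay_combo_left, Finset.sum_add_distrib, ← Finset.mul_sum]
      exact le_rfl⟩)
  obtain ⟨τ', hτ', hB'⟩ := exists_familyPay_eq_familyGuarantee g B
  refine ⟨τ, fun l => hτ l (mem_univ l), fun B₁ hB₁ => ?_⟩
  refine (hsaddle τ' (fun l _ => hτ' l) B₁ hB₁).trans ?_
  simp only [hB']
  exact h B hB

end Family

/-! ### Compactness of the distributions of beliefs -/

section Compactness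

variable {K : Type*} [Fintype K]

/-- The class of value functions of nonnegative vectors to which the values of all evaluations
belong. -/
structure IsHomogeneousNonexpansive (V : (K → ℝ) → ℝ) : Prop where
  smul : ∀ {c : ℝ} {x : K → ℝ}, 0 ≤ c → 0 ≤ x → V (c • x) = c * V x
  le_add : ∀ {x y : K → ℝ}, 0 ≤ x → 0 ≤ y → V x ≤ V y + ∑ k, |x k - y k|

/-- A finite collection of unnormalized beliefs with total mass one: `μ` is carried by nonnegative
vectors, which is expressed through the integrals it defines. -/
structure IsBeliefLaw (μ : (K → ℝ) →₀ ℝ) : Prop where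
  mono : ∀ {f f' : (K → ℝ) → ℝ}, (∀ x, 0 ≤ x → f x ≤ f' x) → expect μ f ≤ expect μ f'
  mass : expect μ (fun x => ∑ k, x k) = 1

lemma IsBeliefLaw.average {μ : ℕ → (K → ℝ) →₀ ℝ} (hμ : ∀ t, IsBeliefLaw (μ t)) {n : ℕ}
    (hn : n ≠ 0) : IsBeliefLaw (average n μ) where
  mono h := by
    rw [expect_average, expect_average]
    gcongr with t _
    exact (hμ t).mono h
  mass := by
    simp only [expect_average, (hμ _).mass, Finset.sum_const, Finset.card_range, nsmul_eq_mul,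
      mul_one]
    exact inv_mul_cancel₀ (Nat.cast_ne_zero.2 hn)

lemma IsHomogeneousNonexpansive.abs_le_one {V : (K → ℝ) → ℝ} (hV : IsHomogeneousNonexpansive V)
    {p : K → ℝ} (hp : p ∈ Δ K) : |V p| ≤ 1 := by
  have h0 : V 0 = 0 := by simpa using hV.smul (c := 0) (x := 0) le_rfl le_rfl
  have hsum : ∑ k, |p k| = 1 := by simp only [abs_of_nonneg (hp.1 _), hp.2]
  have h1 := hV.le_add (x := p) (y := 0) hp.1 le_rfl
  have h2 := hV.le_add (x := 0) (y := p) le_rfl hp.1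
  simp only [Pi.zero_apply, sub_zero, zero_sub, abs_neg, hsum, h0] at h1 h2
  rw [abs_le]
  constructor <;> linarith

lemma exists_finset_dense_Δ (K : Type*) [Fintype K] {ε : ℝ} (hε : 0 < ε) :
    ∃ s : Finset (K → ℝ), ↑s ⊆ Δ K ∧ ∀ p ∈ Δ K, ∃ e ∈ s, ∑ k, |p k - e k| ≤ ε := by
  have hη : 0 < ε / (Fintype.card K + 1) := by positivity
  obtain ⟨s, hs, hfin, hcover⟩ := (isCompact_stdSimplex ℝ K).finite_cover_balls hη
  refine ⟨hfin.toFinset, by rw [hfin.coe_toFinset]; exact hs, fun p hp => ?_⟩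
  obtain ⟨e, he, hpe⟩ := mem_iUnion₂.1 (hcover hp)
  refine ⟨e, hfin.mem_toFinset.2 he, ?_⟩
  calc ∑ k, |p k - e k| ≤ ∑ _k : K, ε / (Fintype.card K + 1) :=
        Finset.sum_le_sum fun k _ => (dist_le_pi_dist p e k).trans hpe.le
    _ = Fintype.card K * ε / (Fintype.card K + 1) := by
        rw [Finset.sum_const, Finset.card_univ, nsmul_eq_mul, mul_div_assoc]
    _ ≤ ε := by
        rw [div_le_iff₀ (by positivity)]
        linarith

lemma exists_finite_directions (K : Type*) [Fintype K] [Nonempty K] {ε : ℝ} (hε : 0 < ε) :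
    ∃ (s : Finset (K → ℝ)) (F : (K → ℝ) → K → ℝ), ↑s ⊆ Δ K ∧ (∀ x, F x ∈ s) ∧
      ∀ x, 0 ≤ x → ∑ k, |x k - ((∑ k, x k) • F x) k| ≤ ε * ∑ k, x k := by
  classical
  obtain ⟨s, hs, hdense⟩ := exists_finset_dense_Δ K hε
  have hdir : ∀ x : K → ℝ, ∃ e ∈ s,
      0 ≤ x → ∑ k, |x k - ((∑ k, x k) • e) k| ≤ ε * ∑ k, x k := by
    intro x
    by_cases hx : 0 ≤ x ∧ ∑ k, x k ≠ 0
    · obtain ⟨hx0, hm⟩ := hx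
      set m := ∑ k, x k
      have hm0 : 0 ≤ m := Finset.sum_nonneg fun k _ => hx0 k
      obtain ⟨e, he, hxe⟩ := hdense (m⁻¹ • x) ⟨smul_nonneg (inv_nonneg.2 hm0) hx0, by
        simp only [Pi.smul_apply, smul_eq_mul, ← Finset.mul_sum]
        exact inv_mul_cancel₀ hm⟩
      refine ⟨e, he, fun _ => ?_⟩
      calc ∑ k, |x k - (m • e) k| = m * ∑ k, |(m⁻¹ • x) k - e k| := by
            rw [Finset.mul_sum]
            refine Finset.sum_congr rfl fun k _ => ?_
            rw [← abs_of_nonneg hm0, ← abs_mul, abs_of_nonneg hm0, mul_sub, Pi.smul_apply,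
              Pi.smul_apply, smul_eq_mul, smul_eq_mul, mul_inv_cancel_left₀ hm]
        _ ≤ ε * m := by
            rw [mul_comm ε]
            exact mul_le_mul_of_nonneg_left hxe hm0
    · obtain ⟨e, he, -⟩ := hdense _ (single_mem_stdSimplex ℝ (Classical.arbitrary K))
      refine ⟨e, he, fun hx0 => ?_⟩
      have hm : ∑ k, x k = 0 := by_contra fun hm => hx ⟨hx0, hm⟩
      have hxk := (Finset.sum_eq_zero_iff_of_nonneg fun k _ => hx0 k).1 hm
      simp [hxk]
  choose F hFs hF using hdir
  exact ⟨s, F, hs, hFs, hF⟩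

open Classical in
/-- The mass of a vector `x` whose discretized direction `F x` is `e`, and zero for other
vectors. -/
noncomputable def cellMass (F : (K → ℝ) → K → ℝ) (e x : K → ℝ) : ℝ :=
  if F x = e then ∑ k, x k else 0

lemma IsBeliefLaw.expect_cellMass_mem_Icc {μ : (K → ℝ) →₀ ℝ} (hμ : IsBeliefLaw μ)
    (F : (K → ℝ) → K → ℝ) (e : K → ℝ) : expect μ (cellMass F e) ∈ Icc (0 : ℝ) 1 := by
  have hmass : ∀ x : K → ℝ, 0 ≤ x → 0 ≤ ∑ k, x k := fun x hx =>
    Finset.sum_nonneg fun k _ => hx k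
  rw [← hμ.mass, ← expect_zero μ]
  constructor <;> refine hμ.mono fun x hx => ?_ <;> unfold cellMass <;> split_ifs
  exacts [hmass x hx, le_rfl, le_rfl, hmass x hx]

lemma IsBeliefLaw.abs_expect_sub_le {μ : (K → ℝ) →₀ ℝ} (hμ : IsBeliefLaw μ) {ε : ℝ}
    {s : Finset (K → ℝ)} {F : (K → ℝ) → K → ℝ} (hs : ↑s ⊆ Δ K) (hFs : ∀ x, F x ∈ s)
    (hF : ∀ x, 0 ≤ x → ∑ k, |x k - ((∑ k, x k) • F x) k| ≤ ε * ∑ k, x k)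
    {V : (K → ℝ) → ℝ} (hV : IsHomogeneousNonexpansive V) :
    |expect μ V - ∑ e ∈ s, V e * expect μ (cellMass F e)| ≤ ε := by
  have hcells : ∑ e ∈ s, V e * expect μ (cellMass F e) =
      expect μ fun x => (∑ k, x k) * V (F x) := by
    simp only [← expect_const_mul, ← expect_finsetSum]
    congr 1
    funext x
    simp [cellMass, hFs x, mul_comm]
  have hε : expect μ (fun x => ε * ∑ k, x k) = ε := by
    rw [expect_const_mul, hμ.mass, mul_one]
  have happrox : ∀ x, 0 ≤ x → V x ≤ (∑ k, x k) * V (F x) + ε * ∑ k, x k ∧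
      (∑ k, x k) * V (F x) ≤ V x + ε * ∑ k, x k := by
    intro x hx
    have hm : 0 ≤ ∑ k, x k := Finset.sum_nonneg fun k _ => hx k
    have hFx : 0 ≤ F x := (hs (hFs x)).1
    rw [← hV.smul hm hFx]
    have h1 := hV.le_add hx (smul_nonneg hm hFx)
    have h2 := hV.le_add (smul_nonneg hm hFx) hx
    simp only [abs_sub_comm _ (x _)] at h2
    exact ⟨h1.trans (add_le_add_right (hF x hx) _), h2.trans (add_le_add_right (hF x hx) _)⟩
  have h1 := hμ.mono fun x hx => (happrox x hx).1
  have h2 := hμ.mono fun x hx => (happrox x hx).2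
  rw [expect_add, hε] at h1 h2
  rw [hcells, abs_le]
  constructor <;> linarith

/- The masses of finitely many cells of directions determine the integrals of all functions in the
class up to `ε`, and they lie in a compact cube. -/
lemma exists_forall_expect_le [Nonempty K] {μ : ℕ → (K → ℝ) →₀ ℝ} (hμ : ∀ n, IsBeliefLaw (μ n))
    {ε : ℝ} (hε : 0 < ε) :
    ∃ n₀, ∀ N, ∃ n ≥ N, ∀ V : (K → ℝ) → ℝ, IsHomogeneousNonexpansive V →
      expect (μ n) V ≤ expect (μ n₀) V + 3 * ε := by
  obtain ⟨s, F, hs, hFs, hF⟩ := exists_finite_directions K hε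
  let z : ℕ → s → ℝ := fun n e => expect (μ n) (cellMass F e)
  obtain ⟨_, -, φ, hφ, hlim⟩ :=
    (isCompact_univ_pi fun _ : s => isCompact_Icc (a := (0 : ℝ)) (b := 1)).tendsto_subseq
      (x := z) fun n e _ => (hμ n).expect_cellMass_mem_Icc F e
  have hη : 0 < ε / (s.card + 1) := by positivity
  obtain ⟨n₁, hn₁⟩ := Metric.cauchySeq_iff'.1 hlim.cauchySeq _ hη
  refine ⟨φ n₁, fun N => ⟨φ (max N n₁), (le_max_left _ _).trans (hφ.id_le _), fun V hV => ?_⟩⟩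
  have hdiff : ∀ e : s, V e * z (φ (max N n₁)) e - V e * z (φ n₁) e ≤ ε / (s.card + 1) := by
    intro e
    rw [← mul_sub]
    refine (le_abs_self _).trans ?_
    rw [abs_mul]
    refine (mul_le_of_le_one_left (abs_nonneg _) (hV.abs_le_one (hs e.2))).trans ?_
    exact (dist_le_pi_dist (z (φ (max N n₁))) (z (φ n₁)) e).trans (hn₁ _ (le_max_right _ _)).le
  have hsum : ∑ e ∈ s, V e * expect (μ (φ (max N n₁))) (cellMass F e) -
      ∑ e ∈ s, V e * expect (μ (φ n₁)) (cellMass F e) ≤ ε := by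
    rw [← Finset.sum_coe_sort, ← Finset.sum_coe_sort s, ← Finset.sum_sub_distrib]
    refine (Finset.sum_le_sum fun e _ => hdiff e).trans ?_
    rw [Finset.sum_const, Finset.card_univ, Fintype.card_coe, nsmul_eq_mul, ← mul_div_assoc,
      div_le_iff₀ (by positivity)]
    linarith
  have h1 := abs_le.1 ((hμ (φ (max N n₁))).abs_expect_sub_le hs hFs hF hV)
  have h2 := abs_le.1 ((hμ (φ n₁)).abs_expect_sub_le hs hFs hF hV)
  linarith [h1.2, h2.1]

end Compactness

/-! ### Windows and impatience -/

section Windows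

lemma abs_sum_range_shift_sub_le {X : ℕ → ℝ} (hX : ∀ t, X t ∈ Icc (0 : ℝ) 1) (N t : ℕ) :
    |∑ r ∈ Finset.range N, X (t + r) - ∑ r ∈ Finset.range N, X r| ≤ t := by
  have hsplit : ∑ r ∈ Finset.range t, X r + ∑ r ∈ Finset.range N, X (t + r) =
      ∑ r ∈ Finset.range N, X r + ∑ r ∈ Finset.range t, X (N + r) := by
    rw [← Finset.sum_range_add, ← Finset.sum_range_add, add_comm]
  have hbound : ∀ s, ∑ r ∈ Finset.range t, X (s + r) ∈ Icc (0 : ℝ) t := fun s =>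
    ⟨Finset.sum_nonneg fun r _ => (hX _).1, by
      simpa using Finset.sum_le_card_nsmul (Finset.range t) _ 1 fun r _ => (hX (s + r)).2⟩
  have h0 := hbound 0
  simp only [zero_add] at h0
  rw [abs_le]
  constructor <;> linarith [h0.1, h0.2, (hbound N).1, (hbound N).2]

/-- The uniform law on the `N` stages from `m` on. -/
noncomputable def window (N m : ℕ) : ℕ →₀ ℝ := average N fun r => Finsupp.single (m + r) 1

lemma expect_window (N m : ℕ) (X : ℕ → ℝ) :
    expect (window N m) X = (N : ℝ)⁻¹ * ∑ r ∈ Finset.range N, X (m + r) := by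
  simp only [window, expect_average, expect_single, one_mul]

lemma isProb_window {N : ℕ} (hN : N ≠ 0) (m : ℕ) : IsProb (window N m) :=
  IsProb.average (fun r => by
    simpa using isProb_sum_single {()} (fun _ => m + r) (w := fun _ => 1) (by simp) (by simp)) hN

lemma expect_window_shift_le {X : ℕ → ℝ} (hX : ∀ t, X t ∈ Icc (0 : ℝ) 1) (N m t : ℕ) :
    (expect (window N m) fun s => X (t + s)) ≤ expect (window N m) X + (N : ℝ)⁻¹ * t := by
  have h := abs_sum_range_shift_sub_le (fun r => hX (m + r)) N t
  simp only [add_left_comm m] at h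
  rw [expect_window, expect_window, ← mul_add]
  gcongr
  linarith [(abs_le.1 h).2]

lemma sum_range_le_of_blocks {n : ℕ} (hn : n ≠ 0) {X : ℕ → ℝ} (hX : ∀ t, 0 ≤ X t) {c : ℝ}
    (h : ∀ b : ℕ, ∑ t ∈ Finset.range n, X (b * n + t) ≤ c) (L m : ℕ) :
    ∑ r ∈ Finset.range (L * n), X (m + r) ≤ (L + 1) * c := by
  have hblocks : ∀ L b : ℕ, ∑ r ∈ Finset.range (L * n), X (b * n + r) ≤ L * c := by
    intro L b
    induction L with
    | zero => simp
    | succ L ih =>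
      have hlast := h (b + L)
      rw [Nat.succ_mul, Finset.sum_range_add]
      simp only [add_mul, add_assoc] at hlast ⊢
      push_cast
      linarith
  have hdiv := Nat.div_add_mod' m n
  have hmod := Nat.mod_lt m (Nat.pos_of_ne_zero hn)
  calc ∑ r ∈ Finset.range (L * n), X (m + r) = ∑ t ∈ Finset.Ico m (m + L * n), X t := by
        rw [Finset.sum_Ico_eq_sum_range, Nat.add_sub_cancel_left]
    _ ≤ ∑ t ∈ Finset.Ico (m / n * n) (m / n * n + (L + 1) * n), X t :=
        Finset.sum_le_sum_of_subset_of_nonneg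
          (Finset.Ico_subset_Ico (by lia) (by rw [add_mul]; lia)) fun t _ _ => hX t
    _ = ∑ r ∈ Finset.range ((L + 1) * n), X (m / n * n + r) := by
        rw [Finset.sum_Ico_eq_sum_range, Nat.add_sub_cancel_left]
    _ ≤ (L + 1) * c := by exact_mod_cast hblocks (L + 1) (m / n)

namespace IsEval

variable {θ : ℕ → ℝ} {X : ℕ → ℝ}

lemma summable (hθ : IsEval θ) : Summable θ :=
  of_not_not fun h => zero_ne_one ((tsum_eq_zero_of_not_summable h).symm.trans hθ.2)

lemma summable_mul (hθ : IsEval θ) (hX : ∀ t, X t ∈ Icc (0 : ℝ) 1) :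
    Summable fun t => θ t * X t :=
  hθ.summable.of_nonneg_of_le (fun t => mul_nonneg (hθ.1 t) (hX t).1)
    fun t => mul_le_of_le_one_right (hθ.1 t) (hX t).2

lemma tsum_mul_succ_le (hθ : IsEval θ) (hX : ∀ t, X t ∈ Icc (0 : ℝ) 1) :
    ∑' t, θ t * X (t + 1) ≤ ∑' t, θ t * X t + impatience θ := by
  have hθX := hθ.summable_mul hX
  have hshift : Summable fun t => θ (t + 1) * X (t + 1) := (summable_nat_add_iff 1).2 hθX
  have hdiff : Summable fun t => |θ (t + 1) - θ t| :=
    (((summable_nat_add_iff 1).2 hθ.summable).sub hθ.summable).abs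
  have hterm : ∀ t, θ t * X (t + 1) ≤ θ (t + 1) * X (t + 1) + |θ (t + 1) - θ t| := fun t => by
    have h := mul_le_of_le_one_right (abs_nonneg (θ (t + 1) - θ t)) (hX (t + 1)).2
    have h' := mul_le_mul_of_nonneg_right (neg_abs_le (θ (t + 1) - θ t)) (hX (t + 1)).1
    linarith
  calc ∑' t, θ t * X (t + 1)
      ≤ ∑' t, (θ (t + 1) * X (t + 1) + |θ (t + 1) - θ t|) :=
        (hθ.summable_mul fun t => hX (t + 1)).tsum_le_tsum hterm (hshift.add hdiff)
    _ = ∑' t, θ (t + 1) * X (t + 1) + impatience θ := hshift.tsum_add hdiff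
    _ ≤ ∑' t, θ t * X t + impatience θ := by
        rw [hθX.tsum_eq_zero_add]
        gcongr
        exact le_add_of_nonneg_left (mul_nonneg (hθ.1 0) (hX 0).1)

lemma tsum_mul_shift_le (hθ : IsEval θ) (hX : ∀ t, X t ∈ Icc (0 : ℝ) 1) (s : ℕ) :
    ∑' t, θ t * X (t + s) ≤ ∑' t, θ t * X t + s * impatience θ := by
  induction s with
  | zero => simp
  | succ s ih =>
    have h := hθ.tsum_mul_succ_le fun t => hX (t + s)
    simp only [add_right_comm _ 1 s, add_assoc] at h
    push_cast
    linarith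

lemma sub_le_tsum_mul (hθ : IsEval θ) (hX : ∀ t, X t ∈ Icc (0 : ℝ) 1) {N : ℕ} (hN : N ≠ 0)
    {c : ℝ} (h : ∀ m, N * c ≤ ∑ r ∈ Finset.range N, X (m + r)) :
    c - N * impatience θ ≤ ∑' t, θ t * X t := by
  have hsum : ∀ s, Summable fun t => θ t * X (t + s) := fun s =>
    hθ.summable_mul fun t => hX (t + s)
  have hI : 0 ≤ impatience θ := tsum_nonneg fun t => abs_nonneg _
  have hle : (N : ℝ) * c ≤ N * (∑' t, θ t * X t + N * impatience θ) := by
    calc (N : ℝ) * c = ∑' t, θ t * (N * c) := by rw [tsum_mul_right, hθ.2, one_mul]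
      _ ≤ ∑' t, ∑ s ∈ Finset.range N, θ t * X (t + s) := by
          refine (hθ.summable.mul_right _).tsum_le_tsum (fun t => ?_)
            (summable_sum fun s _ => hsum s)
          rw [← Finset.mul_sum]
          exact mul_le_mul_of_nonneg_left (h t) (hθ.1 t)
      _ = ∑ s ∈ Finset.range N, ∑' t, θ t * X (t + s) := Summable.tsum_finsetSum fun s _ => hsum s
      _ ≤ ∑ _s ∈ Finset.range N, (∑' t, θ t * X t + N * impatience θ) := by
          refine Finset.sum_le_sum fun s hs => (hθ.tsum_mul_shift_le hX s).trans ?_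
          gcongr
          exact (Finset.mem_range.1 hs).le
      _ = N * (∑' t, θ t * X t + N * impatience θ) := by
          rw [Finset.sum_const, Finset.card_range, nsmul_eq_mul]
  linarith [le_of_mul_le_mul_left hle (by positivity)]

lemma tsum_mul_le (hθ : IsEval θ) (hX : ∀ t, X t ∈ Icc (0 : ℝ) 1) {N : ℕ} (hN : N ≠ 0)
    {c : ℝ} (h : ∀ m, ∑ r ∈ Finset.range N, X (m + r) ≤ N * c) :
    ∑' t, θ t * X t ≤ c + N * impatience θ := by
  have hlow := hθ.sub_le_tsum_mul (X := fun t => 1 - X t) (fun t => Icc.one_sub_mem (hX t)) hN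
    (c := 1 - c) fun m => by
      rw [Finset.sum_sub_distrib, Finset.sum_const, Finset.card_range, nsmul_eq_mul, mul_one,
        mul_one_sub]
      exact sub_le_sub_left (h m) _
  simp only [mul_one_sub] at hlow
  rw [hθ.summable.tsum_sub (hθ.summable_mul hX), hθ.2] at hlow
  linarith

end IsEval

end Windows

/-! ### Values along flows -/

section FlowValue

variable {K I J D : Type*} [Fintype K] [Fintype I] [Fintype J] [Nonempty J] [Fintype D]

/-- The highest payoff, with the stages weighted by `w`, that player 1 guarantees when the state is
initially distributed as `x` and player 2 has not received any signal yet. -/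
noncomputable def flowValue (Q : K → I → K × D → ℝ) (g : K → I → J → ℝ) (w : ℕ →₀ ℝ)
    (x : K → ℝ) : ℝ :=
  sSup ((fun B => expect w fun t => stageGuarantee g t B) '' {B | IsFlow Q x B})

variable {Q : K → I → K × D → ℝ} {g : K → I → J → ℝ} {w : ℕ →₀ ℝ}

lemma continuous_expect_stageGuarantee (g : K → I → J → ℝ) (w : ℕ →₀ ℝ) :
    Continuous fun B : List D → K → I → ℝ => expect w fun t => stageGuarantee g t B :=
  (continuous_expect w).comp (continuous_pi fun t => continuous_stageGuarantee g t)

lemma le_flowValue (hQ : ∀ k i, ∑ y, Q k i y = 1) (g : K → I → J → ℝ) (w : ℕ →₀ ℝ) {x : K → ℝ}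
    {B : List D → K → I → ℝ} (hB : IsFlow Q x B) :
    (expect w fun t => stageGuarantee g t B) ≤ flowValue Q g w x :=
  le_csSup ((isCompact_isFlow hQ x).image (continuous_expect_stageGuarantee g w)).bddAbove
    ⟨B, hB, rfl⟩

lemma exists_flowValue_eq [Nonempty I] (hQ : ∀ k i, Q k i ∈ Δ (K × D)) (g : K → I → J → ℝ)
    (w : ℕ →₀ ℝ) {x : K → ℝ} (hx : 0 ≤ x) :
    ∃ B, IsFlow Q x B ∧ (expect w fun t => stageGuarantee g t B) = flowValue Q g w x :=
  ((isCompact_isFlow (fun k i => (hQ k i).2) x).image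
    (continuous_expect_stageGuarantee g w)).sSup_mem
      ((exists_isFlow (fun k i => (hQ k i).1) hx).elim fun B hB => ⟨_, B, hB, rfl⟩)

lemma flowValue_le_mass [Nonempty I] (hQ : ∀ k i, Q k i ∈ Δ (K × D))
    (hg : ∀ k i j, g k i j ∈ Icc (0 : ℝ) 1) (hw : IsProb w) {x : K → ℝ} (hx : 0 ≤ x) :
    flowValue Q g w x ≤ ∑ k, x k := by
  obtain ⟨B, hB, hval⟩ := exists_flowValue_eq hQ g w hx
  exact hval ▸ hw.expect_le fun t => hB.stageGuarantee_le (fun k i => (hQ k i).2) hg t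

lemma flowValue_add_le [Nonempty I] (hQ : ∀ k i, Q k i ∈ Δ (K × D))
    (hg : ∀ k i j, g k i j ∈ Icc (0 : ℝ) 1) (hw : IsProb w) {x y : K → ℝ} (hx : 0 ≤ x)
    (hy : 0 ≤ y) : flowValue Q g w (x + y) ≤ flowValue Q g w x + ∑ k, y k := by
  have hQ1 : ∀ k i, ∑ y, Q k i y = 1 := fun k i => (hQ k i).2
  obtain ⟨B, hB, hval⟩ := exists_flowValue_eq hQ g w (add_nonneg hx hy)
  obtain ⟨Bx, By, hBx, hBy, rfl⟩ := hB.exists_add (fun k i => (hQ k i).1) hx hy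
  calc flowValue Q g w (x + y)
      ≤ expect w fun t => stageGuarantee g t Bx + ∑ k, y k :=
        hval ▸ expect_mono hw.nonneg fun t => hBy.stageGuarantee_add_le hQ1 hg t Bx
    _ = (expect w fun t => stageGuarantee g t Bx) + ∑ k, y k := by
        rw [expect_add, hw.expect_const]
    _ ≤ flowValue Q g w x + ∑ k, y k := by
        gcongr
        exact le_flowValue hQ1 g w hBx

lemma flowValue_le_add [Nonempty I] (hQ : ∀ k i, Q k i ∈ Δ (K × D))
    (hg : ∀ k i j, g k i j ∈ Icc (0 : ℝ) 1) (hw : ∀ t, 0 ≤ w t) {x y : K → ℝ} (hx : 0 ≤ x)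
    (hy : 0 ≤ y) : flowValue Q g w x ≤ flowValue Q g w (x + y) := by
  obtain ⟨B, hB, hval⟩ := exists_flowValue_eq hQ g w hx
  obtain ⟨B', hB'⟩ := exists_isFlow (fun k i => (hQ k i).1) hy
  rw [← hval]
  refine (expect_mono hw fun t => ?_).trans
    (le_flowValue (fun k i => (hQ k i).2) g w (hB.add hB'))
  exact (le_add_of_nonneg_right (hB'.stageGuarantee_nonneg hg t)).trans
    (add_stageGuarantee_le g t B B')

lemma mul_flowValue_le [Nonempty I] (hQ : ∀ k i, Q k i ∈ Δ (K × D)) (g : K → I → J → ℝ)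
    (hw : ∀ t, 0 ≤ w t) {c : ℝ} (hc : 0 ≤ c) {x : K → ℝ} (hx : 0 ≤ x) :
    c * flowValue Q g w x ≤ flowValue Q g w (c • x) := by
  obtain ⟨B, hB, hval⟩ := exists_flowValue_eq hQ g w hx
  rw [← hval, ← expect_const_mul]
  exact (expect_mono hw fun t => mul_stageGuarantee_le g t hc B).trans
    (le_flowValue (fun k i => (hQ k i).2) g w (hB.smul hc))

lemma isHomogeneousNonexpansive_flowValue [Nonempty I] (hQ : ∀ k i, Q k i ∈ Δ (K × D))
    (hg : ∀ k i j, g k i j ∈ Icc (0 : ℝ) 1) (hw : IsProb w) :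
    IsHomogeneousNonexpansive (flowValue Q g w) where
  smul := by
    intro c x hc hx
    refine le_antisymm ?_ (mul_flowValue_le hQ g hw.nonneg hc hx)
    rcases hc.eq_or_lt with rfl | hpos
    · simpa using flowValue_le_mass hQ hg hw (x := (0 : ℝ) • x) (by simp)
    · have h := mul_flowValue_le hQ g hw.nonneg (inv_nonneg.2 hc) (smul_nonneg hc hx)
      rwa [inv_smul_smul₀ hpos.ne', inv_mul_le_iff₀ hpos] at h
  le_add := by
    intro x y hx hy
    have hmin : 0 ≤ x ⊓ y := le_inf hx hy
    calc flowValue Q g w x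
        = flowValue Q g w (x ⊓ y + (x - x ⊓ y)) := by rw [add_sub_cancel]
      _ ≤ flowValue Q g w (x ⊓ y) + ∑ k, (x - x ⊓ y) k :=
          flowValue_add_le hQ hg hw hmin (sub_nonneg.2 inf_le_left)
      _ ≤ flowValue Q g w (x ⊓ y + (y - x ⊓ y)) + ∑ k, |x k - y k| := by
          gcongr with k
          · exact flowValue_le_add hQ hg hw.nonneg hmin (sub_nonneg.2 inf_le_right)
          · rcases le_total (x k) (y k) with h | h <;> simp [h, le_abs_self]
      _ = flowValue Q g w y + ∑ k, |x k - y k| := by rw [add_sub_cancel]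

end FlowValue

section BeliefLaw

variable {K I D : Type*} [Fintype I] [Fintype D]

/-- The distribution of the unnormalized beliefs of player 2 on the state after `u` stages of the
family of flows `B`: each word of signals contributes one atom. -/
noncomputable def beliefLaw (B : D → List D → K → I → ℝ) (u : ℕ) : (K → ℝ) →₀ ℝ :=
  ∑ d, ∑ h ∈ words D u, Finsupp.single (belief (B d h)) 1

lemma expect_beliefLaw (B : D → List D → K → I → ℝ) (u : ℕ) (f : (K → ℝ) → ℝ) :
    expect (beliefLaw B u) f = ∑ d, ∑ h ∈ words D u, f (belief (B d h)) := by
  simp only [beliefLaw, expect_sum, expect_single, one_mul]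

variable [Fintype K] {Q : K → I → K × D → ℝ} {ξ : K × D → ℝ} {B : D → List D → K → I → ℝ}

lemma isBeliefLaw_beliefLaw (hQ : ∀ k i, ∑ y, Q k i y = 1) (hξ : ∑ y, ξ y = 1)
    (hB : B ∈ flowFamily Q ξ) (u : ℕ) : IsBeliefLaw (beliefLaw B u) where
  mono h := by
    simp only [expect_beliefLaw]
    exact Finset.sum_le_sum fun d _ => Finset.sum_le_sum fun l _ =>
      h _ (belief_nonneg ((mem_flowFamily.1 hB d).nonneg l))
  mass := by
    rw [expect_beliefLaw, ← hξ, Fintype.sum_prod_type_right]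
    exact Finset.sum_congr rfl fun d _ => (mem_flowFamily.1 hB d).sum_belief hQ u

variable {J : Type*} [Fintype J] [Nonempty J] {g : K → I → J → ℝ} {w : ℕ →₀ ℝ}

lemma exists_expect_familyGuarantee_eq [Nonempty I] (hQ : ∀ k i, Q k i ∈ Δ (K × D))
    (g : K → I → J → ℝ) (w : ℕ →₀ ℝ) (hB : B ∈ flowFamily Q ξ) (u : ℕ) :
    ∃ B' ∈ flowFamily Q ξ, (expect w fun s => familyGuarantee g (u + s) B') =
      expect (beliefLaw B u) (flowValue Q g w) := by
  rw [mem_flowFamily] at hB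
  choose C hC hval using fun d h =>
    exists_flowValue_eq hQ g w (belief_nonneg ((hB d).nonneg h))
  refine ⟨fun d => concatFlow u (B d) (C d),
    mem_flowFamily.2 fun d => (hB d).concat (hC d) u, ?_⟩
  simp only [familyGuarantee, stageGuarantee_concatFlow, expect_finsetSum, hval, expect_beliefLaw]

lemma expect_familyGuarantee_le (hQ : ∀ k i, ∑ y, Q k i y = 1) (g : K → I → J → ℝ)
    (w : ℕ →₀ ℝ) (hB : B ∈ flowFamily Q ξ) (u : ℕ) :
    (expect w fun s => familyGuarantee g (u + s) B) ≤
      expect (beliefLaw B u) (flowValue Q g w) := by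
  simp only [familyGuarantee, stageGuarantee_add, expect_finsetSum, expect_beliefLaw]
  exact Finset.sum_le_sum fun d _ => Finset.sum_le_sum fun h _ =>
    le_flowValue hQ g w ((mem_flowFamily.1 hB d).append h)

lemma le_sum_expect_beliefLaw (hQ : ∀ k i, ∑ y, Q k i y = 1)
    (hg : ∀ k i j, g k i j ∈ Icc (0 : ℝ) 1) (hξ : ∑ y, ξ y = 1) (hw : IsProb w)
    (hB : B ∈ flowFamily Q ξ) {n m : ℕ} {c : ℝ}
    (h : c ≤ ∑ t ∈ Finset.range n, familyGuarantee g (m + t) B) :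
    c - (expect w fun s => (s : ℝ)) ≤
      ∑ t ∈ Finset.range n, expect (beliefLaw B (m + t)) (flowValue Q g w) := by
  have hlag : ∀ s : ℕ, c ≤ ∑ t ∈ Finset.range n, familyGuarantee g (m + t + s) B + s := by
    intro s
    have hshift := abs_sum_range_shift_sub_le (X := fun t => familyGuarantee g (m + t) B)
      (fun t => familyGuarantee_mem_Icc hQ hg hξ hB _) n s
    simp only [add_comm s, ← add_assoc] at hshift
    linarith [(abs_le.1 hshift).1]
  calc c - (expect w fun s => (s : ℝ))
      ≤ expect w fun s => ∑ t ∈ Finset.range n, familyGuarantee g (m + t + s) B := by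
        rw [sub_le_iff_le_add, ← expect_add]
        exact hw.le_expect hlag
    _ ≤ ∑ t ∈ Finset.range n, expect (beliefLaw B (m + t)) (flowValue Q g w) := by
        rw [expect_finsetSum]
        exact Finset.sum_le_sum fun t _ => expect_familyGuarantee_le hQ g w hB (m + t)

/- The beliefs along an almost optimal block of length `n + 1` are, for a suitable large `n`, almost
no better than those along one fixed block, whatever the weight `w`; the latter are reached after a
bounded delay. -/
lemma exists_forall_exists_le_expect_familyGuarantee [Nonempty K] [Nonempty I]
    (hQ : ∀ k i, Q k i ∈ Δ (K × D)) (hg : ∀ k i j, g k i j ∈ Icc (0 : ℝ) 1)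
    (hξ : ∑ y, ξ y = 1) {v ε : ℝ} (hε : 0 < ε)
    (hv : ∀ n : ℕ, ∃ m, ∃ B ∈ flowFamily Q ξ,
      n * (v - ε) ≤ ∑ t ∈ Finset.range n, familyGuarantee g (m + t) B) :
    ∃ u : ℕ, ∀ {w : ℕ →₀ ℝ}, IsProb w → ∀ {δ : ℝ},
      (∀ t ≤ u, ∀ X : ℕ → ℝ, (∀ s, X s ∈ Icc (0 : ℝ) 1) →
        (expect w fun s => X (t + s)) ≤ expect w X + δ) →
      ∃ B ∈ flowFamily Q ξ, v - 5 * ε - δ ≤ expect w fun t => familyGuarantee g t B := by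
  have hQ1 : ∀ k i, ∑ y, Q k i y = 1 := fun k i => (hQ k i).2
  choose m B hB hmB using fun n : ℕ => hv (n + 1)
  let μ : ℕ → (K → ℝ) →₀ ℝ := fun n => average (n + 1) fun t => beliefLaw (B n) (m n + t)
  obtain ⟨n₀, hn₀⟩ := exists_forall_expect_le (μ := μ)
    (fun n => IsBeliefLaw.average (fun t => isBeliefLaw_beliefLaw hQ1 hξ (hB n) _)
      n.succ_ne_zero) hε
  refine ⟨m n₀ + n₀, fun {w} hw {δ} hδ => ?_⟩
  obtain ⟨N, hN⟩ := exists_nat_ge ((expect w fun s => (s : ℝ)) / ε)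
  obtain ⟨n, hnN, hn⟩ := hn₀ N
  have hfar : v - 2 * ε ≤ expect (μ n) (flowValue Q g w) := by
    rw [expect_average, le_inv_mul_iff₀ (by positivity)]
    refine le_trans ?_ (le_sum_expect_beliefLaw hQ1 hg hξ hw (hB n) (hmB n))
    have hmean : (expect w fun s => (s : ℝ)) ≤ (n + 1 : ℕ) * ε := by
      rw [div_le_iff₀ hε] at hN
      refine hN.trans ?_
      gcongr
      lia
    linarith
  have hnear : v - 5 * ε ≤ expect (μ n₀) (flowValue Q g w) := by
    linarith [hn _ (isHomogeneousNonexpansive_flowValue hQ hg hw)]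
  obtain ⟨t, ht, hle⟩ := exists_le_expect_of_le_expect_average n₀.succ_ne_zero hnear
  obtain ⟨B', hB', hval⟩ := exists_expect_familyGuarantee_eq hQ g w (hB n₀) (m n₀ + t)
  have hshift := hδ (m n₀ + t) (by lia) (fun s => familyGuarantee g s B') fun s =>
    familyGuarantee_mem_Icc hQ1 hg hξ hB' s
  exact ⟨B', hB', by linarith⟩

end BeliefLaw

section Players

variable {K I J D : Type*} [Fintype K] [Fintype I] [Fintype J] [Fintype D] [Nonempty I]
  [Nonempty J] {Q : K → I → K × D → ℝ} {g : K → I → J → ℝ} {ξ : K × D → ℝ}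

lemma exists_forall_window_le_familyGuarantee [Nonempty K] (hQ : ∀ k i, Q k i ∈ Δ (K × D))
    (hg : ∀ k i j, g k i j ∈ Icc (0 : ℝ) 1) (hξ : ξ ∈ Δ (K × D)) {v ε : ℝ} (hε : 0 < ε)
    (hv : ∀ n : ℕ, ∃ m, ∃ B ∈ flowFamily Q ξ,
      n * (v - ε) ≤ ∑ t ∈ Finset.range n, familyGuarantee g (m + t) B) :
    ∃ N : ℕ, N ≠ 0 ∧ ∃ B ∈ flowFamily Q ξ, ∀ m,
      N * (v - 6 * ε) ≤ ∑ r ∈ Finset.range N, familyGuarantee g (m + r) B := by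
  obtain ⟨u, hu⟩ := exists_forall_exists_le_expect_familyGuarantee hQ hg hξ.2 hε hv
  obtain ⟨n, hn⟩ := exists_nat_ge (u / ε)
  set N := n + 1
  have huN : (N : ℝ)⁻¹ * u ≤ ε := by
    rw [inv_mul_le_iff₀ (by positivity)]
    rw [div_le_iff₀ hε] at hn
    exact hn.trans (by gcongr; exact n.le_succ)
  have hmix : ∀ ρ : ℕ →₀ ℝ, IsProb ρ → ∃ B ∈ flowFamily Q ξ,
      v - 6 * ε ≤ expect ρ fun m => expect (window N m) fun t => familyGuarantee g t B := by
    intro ρ hρ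
    obtain ⟨B, hB, hle⟩ := hu (hρ.mixture (isProb_window n.succ_ne_zero)) (δ := ε) <| by
      intro t ht X hX
      rw [expect_mixture, expect_mixture, ← hρ.expect_const ε, ← expect_add]
      refine expect_mono hρ.nonneg fun m => (expect_window_shift_le hX N m t).trans ?_
      gcongr
      exact le_trans (by gcongr) huN
    rw [expect_mixture] at hle
    exact ⟨B, hB, by linarith⟩
  obtain ⟨B, hB, hle⟩ := exists_forall_le_of_forall_isProb
    (flowFamily_nonempty (fun k i => (hQ k i).1) hξ.1)
    (isCompact_flowFamily (fun k i => (hQ k i).2) ξ) (convex_flowFamily Q ξ)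
    (fun m => (continuous_expect (window N m)).comp
      (continuous_pi fun t => continuous_familyGuarantee g t))
    (fun m => concaveOn_expect (isProb_window n.succ_ne_zero m).nonneg (convex_flowFamily Q ξ)
      fun t => concaveOn_familyGuarantee g t Q ξ) hmix
  refine ⟨N, n.succ_ne_zero, B, hB, fun m => ?_⟩
  have h := hle m
  rwa [Function.comp_apply, expect_window, le_inv_mul_iff₀ (by positivity)] at h

lemma exists_forall_window_familyPay_le (hQ : ∀ k i, Q k i ∈ Δ (K × D))
    (hg : ∀ k i j, g k i j ∈ Icc (0 : ℝ) 1) (hξ : 0 ≤ ξ) {v ε : ℝ} (hε : 0 < ε) {n : ℕ}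
    (hn : n ≠ 0) (hv : ∀ m, ∀ B ∈ flowFamily Q ξ,
      ∑ t ∈ Finset.range n, familyGuarantee g (m + t) B ≤ n * (v + ε)) :
    ∃ N : ℕ, N ≠ 0 ∧ ∃ τ : List D → J → ℝ, (∀ l, τ l ∈ Δ J) ∧ ∀ B ∈ flowFamily Q ξ, ∀ m,
      ∑ r ∈ Finset.range N, familyPay g (m + r) B τ ≤ N * (v + 2 * ε) := by
  choose τ hτ hτB using fun b : ℕ =>
    exists_forall_familyPay_le hQ g hξ ((Finset.range n).image (b * n + ·)) (c := n * (v + ε)) <| by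
      simpa [Finset.sum_image] using hv (b * n)
  simp only [Finset.sum_image, add_right_injective, Function.Injective.injOn] at hτB
  let τ₀ : List D → J → ℝ := fun l => τ ((l.length - 1) / n) l
  have hblock : ∀ b t, t < n → ∀ B,
      familyPay g (b * n + t) B τ₀ = familyPay g (b * n + t) B (τ b) := fun b t ht B =>
    familyPay_congr g _ B fun l hl => by
      simp only [τ₀, hl, Nat.add_sub_cancel, mul_comm b]
      rw [Nat.mul_add_div (Nat.pos_of_ne_zero hn), Nat.div_eq_of_lt ht, add_zero]
  have hτ₀ : ∀ l, τ₀ l ∈ Δ J := fun l => hτ _ l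
  obtain ⟨L, hL⟩ := exists_nat_ge ((v + ε) / ε)
  rw [div_le_iff₀ hε] at hL
  refine ⟨(L + 1) * n, mul_ne_zero L.succ_ne_zero hn, τ₀, hτ₀, fun B hB m => ?_⟩
  calc ∑ r ∈ Finset.range ((L + 1) * n), familyPay g (m + r) B τ₀
      ≤ ((L + 1 : ℕ) + 1) * (n * (v + ε)) := by
        refine sum_range_le_of_blocks hn (familyPay_nonneg hg hB hτ₀) (fun b => ?_) _ m
        exact (Finset.sum_congr rfl fun t ht => hblock b t (Finset.mem_range.1 ht) B).trans_le
          (hτB b B hB)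
    _ = n * ((L + 1) * (v + ε) + (v + ε)) := by push_cast; ring
    _ ≤ n * ((L + 1) * (v + ε) + (L + 1) * ε) := by gcongr; linarith
    _ = ((L + 1) * n : ℕ) * (v + 2 * ε) := by push_cast; ring

lemma exists_value (hQ : ∀ k i, Q k i ∈ Δ (K × D)) (hg : ∀ k i j, g k i j ∈ Icc (0 : ℝ) 1)
    (hξ : ξ ∈ Δ (K × D)) :
    ∃ v : ℝ, (∀ ε > 0, ∃ n : ℕ, n ≠ 0 ∧ ∀ m, ∀ B ∈ flowFamily Q ξ,
        ∑ t ∈ Finset.range n, familyGuarantee g (m + t) B ≤ n * (v + ε)) ∧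
      ∀ ε > 0, ∀ n : ℕ, ∃ m, ∃ B ∈ flowFamily Q ξ,
        n * (v - ε) ≤ ∑ t ∈ Finset.range n, familyGuarantee g (m + t) B := by
  have hmem : ∀ B ∈ flowFamily Q ξ, ∀ t, familyGuarantee g t B ∈ Icc (0 : ℝ) 1 := fun B hB =>
    familyGuarantee_mem_Icc (fun k i => (hQ k i).2) hg hξ.2 hB
  obtain ⟨B₀, hB₀⟩ := flowFamily_nonempty (fun k i => (hQ k i).1) hξ.1
  let S : Set ℝ := {c | ∃ n : ℕ, n ≠ 0 ∧ ∀ m, ∀ B ∈ flowFamily Q ξ,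
    ∑ t ∈ Finset.range n, familyGuarantee g (m + t) B ≤ n * c}
  have hne : S.Nonempty := ⟨1, 1, one_ne_zero, fun m B hB => by simpa using (hmem B hB m).2⟩
  have hbdd : BddBelow S := by
    refine ⟨0, ?_⟩
    rintro c ⟨n, hn, h⟩
    have hsum : 0 ≤ ∑ t ∈ Finset.range n, familyGuarantee g (0 + t) B₀ :=
      Finset.sum_nonneg fun t _ => (hmem B₀ hB₀ _).1
    exact nonneg_of_mul_nonneg_right (hsum.trans (h 0 B₀ hB₀)) (by positivity)
  refine ⟨sInf S, fun ε hε => ?_, fun ε hε n => ?_⟩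
  · obtain ⟨c, ⟨n, hn, h⟩, hc⟩ := exists_lt_of_csInf_lt hne (lt_add_of_pos_right (sInf S) hε)
    exact ⟨n, hn, fun m B hB => (h m B hB).trans (by gcongr)⟩
  · rcases eq_or_ne n 0 with rfl | hn
    · exact ⟨0, B₀, hB₀, by simp⟩
    by_contra! hcon
    have hle := csInf_le hbdd (a := sInf S - ε) ⟨n, hn, fun m B hB => (hcon m B hB).le⟩
    linarith

end Players

/-! ### Histories and strategies -/

section Histories

variable {K I J C D : Type*}

/-- A history of the game up to a stage: the current state, the past signals and actions and the
current signal of player 1, and those of player 2. -/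
abbrev History (K I J C D : Type*) : Type _ := K × (List (C × I) × C) × (List (D × J) × D)

/-- The word of signals received by player 2 along a history. -/
def signals (st : History K I J C D) : List D := st.2.2.1.map Prod.fst ++ [st.2.2.2]

/-- The word of signals of player 2 which player 1 infers from his own signals by means of the map
`dt` of Assumption 1. -/
def inferredSignals (dt : C → D) (h : List (C × I)) (c : C) : List D :=
  h.map (fun a => dt a.1) ++ [dt c]

/-- The history following `st` when the actions `i` and `j` are played and `y` is drawn. -/
def extend (st : History K I J C D) (i : I) (j : J) (y : K × C × D) : History K I J C D :=
  (y.1, (st.2.1.1 ++ [(st.2.1.2, i)], y.2.1), (st.2.2.1 ++ [(st.2.2.2, j)], y.2.2))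

lemma signals_extend (st : History K I J C D) (i : I) (j : J) (y : K × C × D) :
    signals (extend st i j y) = signals st ++ [y.2.2] := by
  simp [signals, extend]

variable [Fintype K] [Fintype I] [Fintype J] [Fintype C] [Fintype D]
  {q : K → I → J → K × C × D → ℝ} {π : K × C × D → ℝ} {σ : List (C × I) → C → I → ℝ}
  {τ : List (D × J) → D → J → ℝ}

/-- The law of the history one stage after the history `st`. -/
noncomputable def stepLaw (q : K → I → J → K × C × D → ℝ) (σ : List (C × I) → C → I → ℝ)
    (τ : List (D × J) → D → J → ℝ) (st : History K I J C D) : History K I J C D →₀ ℝ :=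
  ∑ x : I × J × K × C × D, Finsupp.single (extend st x.1 x.2.1 x.2.2)
    (σ st.2.1.1 st.2.1.2 x.1 * τ st.2.2.1 st.2.2.2 x.2.1 * q st.1 x.1 x.2.1 x.2.2)

lemma hist_succ (q : K → I → J → K × C × D → ℝ) (π : K × C × D → ℝ) (σ : List (C × I) → C → I → ℝ)
    (τ : List (D × J) → D → J → ℝ) (t : ℕ) :
    hist q π σ τ (t + 1) = mixture (hist q π σ τ t) (stepLaw q σ τ) := by
  simp only [hist, mixture, stepLaw, extend, Finsupp.linearCombination_apply, Finset.smul_sum,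
    Finsupp.smul_single, smul_eq_mul, Fintype.sum_prod_type, mul_assoc]

lemma isProb_hist (hq : ∀ k i j, q k i j ∈ Δ (K × C × D)) (hπ : π ∈ Δ (K × C × D))
    (hσ : IsStrat1 σ) (hτ : IsStrat2 τ) (t : ℕ) : IsProb (hist q π σ τ t) := by
  induction t with
  | zero => exact isProb_sum_single _ _ (fun x _ => hπ.1 x) hπ.2
  | succ t ih =>
    rw [hist_succ]
    refine ih.mixture fun st => isProb_sum_single _ _ (fun x _ => ?_) ?_
    · exact mul_nonneg (mul_nonneg ((hσ _ _).1 _) ((hτ _ _).1 _)) ((hq _ _ _).1 _)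
    · simp only [Fintype.sum_prod_type (α₁ := I), Fintype.sum_prod_type (α₁ := J), ← Finset.mul_sum,
        (hq _ _ _).2, (hτ _ _).2, (hσ _ _).2, mul_one]

lemma expect_hist_zero (f : History K I J C D → ℝ) :
    expect (hist q π σ τ 0) f = ∑ x, π x * f (x.1, ([], x.2.1), ([], x.2.2)) := by
  simp only [hist, expect_sum, expect_single]

lemma expect_hist_succ (t : ℕ) (f : History K I J C D → ℝ) :
    expect (hist q π σ τ (t + 1)) f = expect (hist q π σ τ t) fun st =>
      ∑ i, ∑ j, σ st.2.1.1 st.2.1.2 i * τ st.2.2.1 st.2.2.2 j *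
        ∑ y, q st.1 i j y * f (extend st i j y) := by
  simp only [hist_succ, expect_mixture, stepLaw, expect_sum, expect_single,
    Fintype.sum_prod_type (α₁ := I), Fintype.sum_prod_type (α₁ := J), Finset.mul_sum, mul_assoc]

lemma stagePay_eq_expect (g : K → I → J → ℝ) (t : ℕ) :
    stagePay q g π σ τ t = expect (hist q π σ τ t) fun st =>
      ∑ i, ∑ j, σ st.2.1.1 st.2.1.2 i * τ st.2.2.1 st.2.2.2 j * g st.1 i j := by
  simp only [stagePay, expect_eq_sum, Finset.mul_sum, mul_assoc]

lemma stagePay_mem_Icc (hq : ∀ k i j, q k i j ∈ Δ (K × C × D)) (hπ : π ∈ Δ (K × C × D))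
    (hσ : IsStrat1 σ) (hτ : IsStrat2 τ) {g : K → I → J → ℝ} (hg : ∀ k i j, g k i j ∈ Icc (0 : ℝ) 1)
    (t : ℕ) : stagePay q g π σ τ t ∈ Icc (0 : ℝ) 1 := by
  have hweight : ∀ (st : History K I J C D) i j,
      0 ≤ σ st.2.1.1 st.2.1.2 i * τ st.2.2.1 st.2.2.2 j := fun st i j =>
    mul_nonneg ((hσ _ _).1 _) ((hτ _ _).1 _)
  have hprob := isProb_hist hq hπ hσ hτ t
  rw [stagePay_eq_expect]
  refine ⟨hprob.le_expect fun st => ?_, hprob.expect_le fun st => ?_⟩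
  · exact Finset.sum_nonneg fun i _ => Finset.sum_nonneg fun j _ =>
      mul_nonneg (hweight st i j) (hg _ _ _).1
  · calc ∑ i, ∑ j, σ st.2.1.1 st.2.1.2 i * τ st.2.2.1 st.2.2.2 j * g st.1 i j
        ≤ ∑ i, ∑ j, σ st.2.1.1 st.2.1.2 i * τ st.2.2.1 st.2.2.2 j :=
          Finset.sum_le_sum fun i _ => Finset.sum_le_sum fun j _ =>
            mul_le_of_le_one_right (hweight st i j) (hg _ _ _).2
      _ = 1 := by simp only [← Finset.mul_sum, (hτ _ _).2, mul_one, (hσ _ _).2]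

lemma exists_of_mem_support_hist_zero {st : History K I J C D}
    (h : st ∈ (hist q π σ τ 0).support) :
    ∃ x, π x ≠ 0 ∧ st = (x.1, ([], x.2.1), ([], x.2.2)) := by
  obtain ⟨x, -, hx, rfl⟩ := exists_of_mem_support_sum_single h
  exact ⟨x, hx, rfl⟩

lemma exists_of_mem_support_hist_succ {t : ℕ} {st : History K I J C D}
    (h : st ∈ (hist q π σ τ (t + 1)).support) :
    ∃ st' ∈ (hist q π σ τ t).support, ∃ i j y, q st'.1 i j y ≠ 0 ∧ st = extend st' i j y := by
  rw [hist_succ] at h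
  obtain ⟨st', hst', h⟩ := exists_of_mem_support_mixture h
  obtain ⟨x, -, hx, rfl⟩ := exists_of_mem_support_sum_single h
  exact ⟨st', hst', x.1, x.2.1, x.2.2, right_ne_zero_of_mul hx, rfl⟩

lemma length_signals_of_mem_support_hist {t : ℕ} {st : History K I J C D}
    (h : st ∈ (hist q π σ τ t).support) : (signals st).length = t + 1 := by
  induction t generalizing st with
  | zero =>
    obtain ⟨x, -, rfl⟩ := exists_of_mem_support_hist_zero h
    rfl
  | succ t ih =>
    obtain ⟨st', hst', i, j, y, -, rfl⟩ := exists_of_mem_support_hist_succ h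
    rw [signals_extend, List.length_append, ih hst', List.length_singleton]

/-- Assumption 1 for the law `p` of a state and a pair of signals: player 1 can read the state and
the signal of player 2 off his own signal. -/
def Informs (kt : C → K) (dt : C → D) (p : K × C × D → ℝ) : Prop :=
  ∀ k c d, ¬(kt c = k ∧ dt c = d) → p (k, c, d) = 0

lemma inferredSignals_eq_of_mem_support_hist {kt : C → K} {dt : C → D}
    (hq : ∀ k i j, Informs kt dt (q k i j)) (hπ : Informs kt dt π) {t : ℕ}
    {st : History K I J C D} (h : st ∈ (hist q π σ τ t).support) :
    kt st.2.1.2 = st.1 ∧ inferredSignals dt st.2.1.1 st.2.1.2 = signals st := by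
  induction t generalizing st with
  | zero =>
    obtain ⟨⟨k, c, d⟩, hx, rfl⟩ := exists_of_mem_support_hist_zero h
    obtain ⟨hk, hd⟩ := not_not.1 fun hcd => hx (hπ k c d hcd)
    exact ⟨hk, by simp [inferredSignals, signals, hd]⟩
  | succ t ih =>
    obtain ⟨st', hst', i, j, ⟨k, c, d⟩, hx, rfl⟩ := exists_of_mem_support_hist_succ h
    obtain ⟨hk, hd⟩ := not_not.1 fun hcd => hx (hq _ i j k c d hcd)
    refine ⟨hk, ?_⟩
    rw [signals_extend, ← (ih hst').2]
    simp [inferredSignals, extend, hd]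

/-- The marginal on states and signals of player 2. -/
def marginal (p : K × C × D → ℝ) : K × D → ℝ := fun y => ∑ c, p (y.1, c, y.2)

lemma sum_marginal_mul (p : K × C × D → ℝ) (f : K × D → ℝ) :
    ∑ y, marginal p y * f y = ∑ x, p x * f (x.1, x.2.2) := by
  simp only [marginal, Fintype.sum_prod_type, Finset.sum_mul]
  exact Finset.sum_congr rfl fun k _ => Finset.sum_comm

lemma marginal_mem_Δ {p : K × C × D → ℝ} (hp : p ∈ Δ (K × C × D)) : marginal p ∈ Δ (K × D) := by
  refine ⟨fun y => Finset.sum_nonneg fun c _ => hp.1 _, ?_⟩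
  simpa only [mul_one, hp.2] using sum_marginal_mul p fun _ => 1

end Histories

section Realization

variable {K I J C D : Type*}

/-- A family of flows indexed by the first signal of player 2, as a function of the whole word of
signals. It has the junk value `0` at the empty word. -/
def atWord (B : D → List D → K → I → ℝ) : List D → K → I → ℝ
  | [] => 0
  | d :: h => B d h

section AtWord

variable [Fintype K] [Fintype I] {Q : K → I → K × D → ℝ} {ξ : K × D → ℝ}
  {B : D → List D → K → I → ℝ}

lemma atWord_nonneg (hB : B ∈ flowFamily Q ξ) : ∀ l, 0 ≤ atWord B l
  | [] => le_rfl
  | d :: h => (mem_flowFamily.1 hB d).nonneg h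

lemma belief_atWord_singleton (hB : B ∈ flowFamily Q ξ) (d : D) :
    belief (atWord B [d]) = fun k => ξ (k, d) :=
  (mem_flowFamily.1 hB d).root

lemma belief_atWord_snoc (hB : B ∈ flowFamily Q ξ) (l : List D) (d d' : D) :
    belief (atWord B (l ++ [d] ++ [d'])) = transport Q (atWord B (l ++ [d])) d' :=
  match l with
  | [] => (mem_flowFamily.1 hB d).step [] d'
  | a :: l => (mem_flowFamily.1 hB a).step (l ++ [d]) d'

lemma familyGuarantee_eq_sum_atWord [Fintype J] [Nonempty J] [Fintype D] (g : K → I → J → ℝ)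
    (t : ℕ) (B : D → List D → K → I → ℝ) :
    familyGuarantee g t B = ∑ h ∈ words D t, ∑ d, worstPay g (atWord B (h ++ [d])) := by
  rw [← sum_words_snoc t fun l => worstPay g (atWord B l), sum_words_cons]
  rfl

end AtWord

/-- The probability that player 2 plays the actions recorded in `l` when he uses `τ` after the past
`p` and receives the signals recorded in `l`. -/
def actionWeight (τ : List (D × J) → D → J → ℝ) : List (D × J) → List (D × J) → ℝ
  | _, [] => 1
  | p, a :: l => τ p a.1 a.2 * actionWeight τ (p ++ [a]) l

lemma actionWeight_snoc (τ : List (D × J) → D → J → ℝ) (p l : List (D × J)) (a : D × J) :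
    actionWeight τ p (l ++ [a]) = actionWeight τ p l * τ (p ++ l) a.1 a.2 := by
  induction l generalizing p with
  | nil => simp [actionWeight]
  | cons b l ih => simp [actionWeight, ih, mul_assoc]

lemma actionWeight_nonneg [Fintype J] {τ : List (D × J) → D → J → ℝ} (hτ : IsStrat2 τ)
    (p l : List (D × J)) : 0 ≤ actionWeight τ p l := by
  induction l generalizing p with
  | nil => exact zero_le_one
  | cons b l ih => exact mul_nonneg ((hτ _ _).1 _) (ih _)

lemma sum_actionWeight_mul [Fintype J] [Fintype D] {τ : List (D × J) → D → J → ℝ}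
    (hτ : IsStrat2 τ) (t : ℕ) (f : List D → ℝ) :
    ∑ l ∈ words (D × J) t, actionWeight τ [] l * f (l.map Prod.fst) = ∑ h ∈ words D t, f h := by
  induction t generalizing f with
  | zero => simp [sum_words_zero, actionWeight]
  | succ t ih =>
    rw [sum_words_snoc, sum_words_snoc, ← ih]
    refine Finset.sum_congr rfl fun l _ => ?_
    simp only [actionWeight_snoc, List.nil_append, List.map_append, List.map_cons, List.map_nil,
      Fintype.sum_prod_type, ← Finset.sum_mul, ← Finset.mul_sum, (hτ l _).2, mul_one]

/-- The strategy of player 1 which plays according to the family of flows `B`, given the state and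
the signals of player 2 as he infers them from his own signals. -/
noncomputable def realize [Fintype I] [Nonempty I] (kt : C → K) (dt : C → D)
    (B : D → List D → K → I → ℝ) : List (C × I) → C → I → ℝ :=
  fun h c => policyOf (atWord B (inferredSignals dt h c)) (kt c)

variable [Fintype K] [Fintype I] [Nonempty I]

lemma isStrat1_realize (kt : C → K) (dt : C → D) {Q : K → I → K × D → ℝ} {ξ : K × D → ℝ}
    {B : D → List D → K → I → ℝ} (hB : B ∈ flowFamily Q ξ) : IsStrat1 (realize kt dt B) :=
  fun _ _ => policyOf_mem_Δ (atWord_nonneg hB _) _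

variable [Fintype J]

lemma sum_belief_mul_policyOf {b : K → I → ℝ} (hb : 0 ≤ b) (w : J → ℝ)
    (f : K → I → J → ℝ) :
    ∑ k, belief b k * ∑ i, ∑ j, policyOf b k i * w j * f k i j = ∑ j, w j * actionPay f b j := by
  have hterm : ∀ k, belief b k * ∑ i, ∑ j, policyOf b k i * w j * f k i j =
      ∑ j, w j * ∑ i, b k i * f k i j := fun k => by
    simp only [Finset.mul_sum]
    rw [Finset.sum_comm]
    refine Finset.sum_congr rfl fun j _ => Finset.sum_congr rfl fun i _ => ?_
    rw [← belief_mul_policyOf hb]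
    ring
  simp only [hterm, actionPay, Finset.mul_sum]
  exact Finset.sum_comm

variable [Fintype C] [Fintype D] {q : K → I → J → K × C × D → ℝ} {π : K × C × D → ℝ} {kt : C → K}
  {dt : C → D} {Q : K → I → K × D → ℝ} {B : D → List D → K → I → ℝ}

lemma expect_hist_realize (hq : ∀ k i j, Informs kt dt (q k i j)) (hπ : Informs kt dt π)
    (hQ : ∀ k i j, marginal (q k i j) = Q k i) (hB : B ∈ flowFamily Q (marginal π))
    (τ : List (D × J) → D → J → ℝ) (t : ℕ) (f : K → List (D × J) → D → ℝ) :
    expect (hist q π (realize kt dt B) τ t) (fun st => f st.1 st.2.2.1 st.2.2.2) =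
      ∑ l ∈ words (D × J) t, actionWeight τ [] l *
        ∑ d, ∑ k, belief (atWord B (l.map Prod.fst ++ [d])) k * f k l d := by
  induction t generalizing f with
  | zero =>
    rw [expect_hist_zero, ← sum_marginal_mul π fun y => f y.1 [] y.2, Fintype.sum_prod_type_right]
    simp [sum_words_zero, actionWeight, belief_atWord_singleton hB]
  | succ t ih =>
    let next : List (D × J) → D → K → I → J → ℝ := fun l d k i j =>
      ∑ y, Q k i y * f y.1 (l ++ [(d, j)]) y.2
    have hstep : expect (hist q π (realize kt dt B) τ (t + 1))
        (fun st => f st.1 st.2.2.1 st.2.2.2) =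
        expect (hist q π (realize kt dt B) τ t) fun st =>
          ∑ i, ∑ j, policyOf (atWord B (signals st)) st.1 i * τ st.2.2.1 st.2.2.2 j *
            next st.2.2.1 st.2.2.2 st.1 i j := by
      rw [expect_hist_succ]
      refine expect_congr fun st hst => ?_
      obtain ⟨hk, hs⟩ := inferredSignals_eq_of_mem_support_hist hq hπ hst
      simp only [realize, hk, hs]
      refine Finset.sum_congr rfl fun i _ => Finset.sum_congr rfl fun j _ => congrArg _ ?_
      simp only [next, ← hQ st.1 i j, sum_marginal_mul, extend]
    have hnext : ∀ b l d j, actionPay (next l d) b j =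
        ∑ d', ∑ k, transport Q b d' k * f k (l ++ [(d, j)]) d' := fun b l d j =>
      (sum_transport_mul Q b _).symm
    rw [hstep, sum_words_snoc]
    refine (ih fun k l d => ∑ i, ∑ j, policyOf (atWord B (l.map Prod.fst ++ [d])) k i * τ l d j *
      next l d k i j).trans <| Finset.sum_congr rfl fun l _ => ?_
    simp only [sum_belief_mul_policyOf (atWord_nonneg hB _), hnext, Fintype.sum_prod_type,
      actionWeight_snoc, List.nil_append, List.map_append, List.map_cons, List.map_nil,
      belief_atWord_snoc hB]
    simp only [mul_assoc, ← Finset.mul_sum]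

lemma familyGuarantee_le_stagePay_realize [Nonempty J] (hq : ∀ k i j, Informs kt dt (q k i j))
    (hπ : Informs kt dt π) (hQ : ∀ k i j, marginal (q k i j) = Q k i)
    (hB : B ∈ flowFamily Q (marginal π)) (g : K → I → J → ℝ) {τ : List (D × J) → D → J → ℝ}
    (hτ : IsStrat2 τ) (t : ℕ) :
    familyGuarantee g t B ≤ stagePay q g π (realize kt dt B) τ t := by
  have hpay : stagePay q g π (realize kt dt B) τ t = ∑ l ∈ words (D × J) t, actionWeight τ [] l *
      ∑ d, ∑ j, τ l d j * actionPay g (atWord B (l.map Prod.fst ++ [d])) j := by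
    simp only [← sum_belief_mul_policyOf (atWord_nonneg hB _)]
    rw [stagePay_eq_expect, ← expect_hist_realize hq hπ hQ hB τ t fun k l d => _]
    refine expect_congr fun st hst => ?_
    obtain ⟨hk, hs⟩ := inferredSignals_eq_of_mem_support_hist hq hπ hst
    simp only [realize, hk, hs, signals]
  rw [hpay, familyGuarantee_eq_sum_atWord, ← sum_actionWeight_mul hτ]
  refine Finset.sum_le_sum fun l _ => mul_le_mul_of_nonneg_left
    (Finset.sum_le_sum fun d _ => ?_) (actionWeight_nonneg hτ [] l)
  calc worstPay g (atWord B (l.map Prod.fst ++ [d]))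
      = ∑ j, τ l d j * worstPay g (atWord B (l.map Prod.fst ++ [d])) := by
        rw [← Finset.sum_mul, (hτ l d).2, one_mul]
    _ ≤ _ := Finset.sum_le_sum fun j _ =>
        mul_le_mul_of_nonneg_left (worstPay_le g _ j) ((hτ l d).1 j)

end Realization

section InducedFlow

variable {K I J C D : Type*} [Fintype K] [Fintype I] [Fintype J] [Fintype C] [Fintype D]
  {q : K → I → J → K × C × D → ℝ} {π : K × C × D → ℝ} {σ : List (C × I) → C → I → ℝ}
  {τ : List (D × J) → D → J → ℝ} {Q : K → I → K × D → ℝ}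

open Classical in
/-- The family of flows induced by a pair of strategies: the unnormalized joint law of the state and
of the action of player 1 on the event that player 2 has received the word of signals `d :: h`. -/
noncomputable def inducedFlow (q : K → I → J → K × C × D → ℝ) (π : K × C × D → ℝ)
    (σ : List (C × I) → C → I → ℝ) (τ : List (D × J) → D → J → ℝ) (d : D) (h : List D) :
    K → I → ℝ :=
  fun k i => expect (hist q π σ τ h.length) fun st =>
    if signals st = d :: h then if st.1 = k then σ st.2.1.1 st.2.1.2 i else 0 else 0

open Classical in
lemma sum_inducedFlow_mul (d : D) (h : List D) (f : K → I → ℝ) :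
    ∑ k, ∑ i, inducedFlow q π σ τ d h k i * f k i = expect (hist q π σ τ h.length) fun st =>
      if signals st = d :: h then ∑ i, σ st.2.1.1 st.2.1.2 i * f st.1 i else 0 := by
  simp only [inducedFlow, mul_comm _ (f _ _), ← expect_const_mul, ← expect_finsetSum]
  refine congrArg _ (funext fun st => ?_)
  rw [Finset.sum_comm]
  split_ifs <;> simp

open Classical in
lemma belief_inducedFlow (hσ : IsStrat1 σ) (d : D) (h : List D) (k : K) :
    belief (inducedFlow q π σ τ d h) k = expect (hist q π σ τ h.length) fun st =>
      if signals st = d :: h then if st.1 = k then 1 else 0 else 0 := by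
  simp only [belief, inducedFlow, ← expect_finsetSum]
  refine congrArg _ (funext fun st => ?_)
  split_ifs <;> simp [(hσ _ _).2]

open Classical in
lemma sum_mul_indicator (p : K × C × D → ℝ) (w h : List D) (k : K) (d : D) :
    ∑ y, p y * (if w ++ [y.2.2] = h ++ [d] then if y.1 = k then 1 else 0 else 0) =
      if w = h then marginal p (k, d) else 0 := by
  rw [← sum_marginal_mul p fun y => if w ++ [y.2] = h ++ [d] then if y.1 = k then 1 else 0 else 0]
  by_cases hw : w = h
  · simp [hw, Fintype.sum_prod_type]
  · have hne : ∀ d', w ++ [d'] ≠ h ++ [d] := fun d' he => hw (List.append_inj_left' he rfl)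
    simp [hw, hne]

open Classical in
lemma inducedFlow_mem_flowFamily (hq : ∀ k i j, q k i j ∈ Δ (K × C × D))
    (hπ : π ∈ Δ (K × C × D)) (hQ : ∀ k i j, marginal (q k i j) = Q k i) (hσ : IsStrat1 σ)
    (hτ : IsStrat2 τ) : inducedFlow q π σ τ ∈ flowFamily Q (marginal π) := by
  refine mem_flowFamily.2 fun d =>
    ⟨fun h k i => ?_, funext fun k => ?_, fun h d' => funext fun k => ?_⟩
  · refine (isProb_hist hq hπ hσ hτ _).le_expect fun st => ?_
    split_ifs
    exacts [(hσ _ _).1 i, le_rfl, le_rfl]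
  · rw [belief_inducedFlow hσ, List.length_nil, expect_hist_zero]
    exact (sum_mul_indicator π [] [] k d).trans (if_pos rfl)
  · calc belief (inducedFlow q π σ τ d (h ++ [d'])) k
        = expect (hist q π σ τ h.length) fun st => ∑ i, ∑ j, σ st.2.1.1 st.2.1.2 i *
            τ st.2.2.1 st.2.2.2 j * if signals st = d :: h then Q st.1 i (k, d') else 0 := by
          rw [belief_inducedFlow hσ, List.length_append, List.length_singleton, expect_hist_succ]
          refine congrArg _ (funext fun st => Finset.sum_congr rfl fun i _ =>
            Finset.sum_congr rfl fun j _ => congrArg _ ?_)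
          simp only [signals_extend, ← hQ st.1 i j]
          exact sum_mul_indicator (q st.1 i j) (signals st) (d :: h) k d'
      _ = expect (hist q π σ τ h.length) fun st => if signals st = d :: h then
            ∑ i, σ st.2.1.1 st.2.1.2 i * Q st.1 i (k, d') else 0 := by
          refine congrArg _ (funext fun st => ?_)
          split_ifs
          · simp only [← Finset.sum_mul, ← Finset.mul_sum, (hτ _ _).2, mul_one]
          · simp only [mul_zero, Finset.sum_const_zero]
      _ = transport Q (inducedFlow q π σ τ d h) d' k :=
          (sum_inducedFlow_mul d h fun k' i => Q k' i (k, d')).symm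

/-- The strategy of player 2 which plays `τ l` after the word of signals `l`, regardless of his own
past actions. -/
def ofSignals (τ : List D → J → ℝ) : List (D × J) → D → J → ℝ :=
  fun h d => τ (h.map Prod.fst ++ [d])

lemma familyPay_inducedFlow (g : K → I → J → ℝ) (τ : List D → J → ℝ) (t : ℕ) :
    familyPay g t (inducedFlow q π σ (ofSignals τ)) τ = stagePay q g π σ (ofSignals τ) t := by
  classical
  let pay : List D → History K I J C D → ℝ := fun l st =>
    ∑ j, τ l j * ∑ i, σ st.2.1.1 st.2.1.2 i * g st.1 i j
  have hpay : ∀ d, ∀ h ∈ words D t,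
      ∑ j, τ (d :: h) j * actionPay g (inducedFlow q π σ (ofSignals τ) d h) j =
        expect (hist q π σ (ofSignals τ) t) fun st =>
          if signals st = d :: h then pay (d :: h) st else 0 := fun d h hh => by
    simp only [actionPay, sum_inducedFlow_mul, mem_words.1 hh, ← expect_const_mul,
      ← expect_finsetSum]
    refine congrArg _ (funext fun st => ?_)
    split_ifs <;> simp [pay]
  calc familyPay g t (inducedFlow q π σ (ofSignals τ)) τ
      = expect (hist q π σ (ofSignals τ) t) fun st =>
          ∑ d, ∑ h ∈ words D t, if signals st = d :: h then pay (d :: h) st else 0 := by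
        simp only [familyPay, expect_finsetSum]
        exact Finset.sum_congr rfl fun d _ => Finset.sum_congr rfl (hpay d)
    _ = expect (hist q π σ (ofSignals τ) t) fun st => pay (signals st) st := by
        refine expect_congr fun st hst => ?_
        rw [← sum_words_cons t fun l => if signals st = l then pay l st else 0,
          Finset.sum_ite_eq, if_pos (mem_words.2 (length_signals_of_mem_support_hist hst))]
    _ = stagePay q g π σ (ofSignals τ) t := by
        rw [stagePay_eq_expect]
        refine congrArg _ (funext fun st => ?_)
        simp only [pay, Finset.mul_sum]
        rw [Finset.sum_comm]
        exact Finset.sum_congr rfl fun i _ => Finset.sum_congr rfl fun j _ => by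
          rw [ofSignals, signals]; ring

end InducedFlow

/-! ### The uniform value -/

section UniformValue

variable {K I J C D : Type*} [Fintype K] [Fintype I] [Fintype J] [Fintype C] [Fintype D]
  {q : K → I → J → K × C × D → ℝ} {g : K → I → J → ℝ} {π : K × C × D → ℝ}

/-- Player 1 guarantees `c` in all sufficiently patient games: some strategy of his yields at least
`c` whenever the impatience of the evaluation is small. -/
def PatientlyGuarantees₁ (q : K → I → J → K × C × D → ℝ) (g : K → I → J → ℝ)
    (π : K × C × D → ℝ) (c : ℝ) : Prop :=
  ∃ α > 0, ∃ σ, IsStrat1 σ ∧ ∀ θ, IsEval θ → impatience θ ≤ α →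
    ∀ τ, IsStrat2 τ → payoff q g π θ σ τ ≥ c

/-- Player 2 guarantees `c` in all sufficiently patient games: some strategy of his yields at most
`c` whenever the impatience of the evaluation is small. -/
def PatientlyGuarantees₂ (q : K → I → J → K × C × D → ℝ) (g : K → I → J → ℝ)
    (π : K × C × D → ℝ) (c : ℝ) : Prop :=
  ∃ α > 0, ∃ τ, IsStrat2 τ ∧ ∀ θ, IsEval θ → impatience θ ≤ α →
    ∀ σ, IsStrat1 σ → payoff q g π θ σ τ ≤ c

/-- `v` is the general uniform value of the game: for each `ε > 0` both players have strategies
which guarantee `v` up to `ε` in all sufficiently patient games. -/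
def IsUniformValue (q : K → I → J → K × C × D → ℝ) (g : K → I → J → ℝ) (π : K × C × D → ℝ)
    (v : ℝ) : Prop :=
  ∀ ε > (0 : ℝ), ∃ α > (0 : ℝ), ∃ σ τ, IsStrat1 σ ∧ IsStrat2 τ ∧
    ∀ θ : ℕ → ℝ, IsEval θ → impatience θ ≤ α →
      (∀ τ', IsStrat2 τ' → payoff q g π θ σ τ' ≥ v - ε) ∧
      ∀ σ', IsStrat1 σ' → payoff q g π θ σ' τ ≤ v + ε

lemma isUniformValue_of_patientlyGuarantees {v : ℝ}
    (h₁ : ∀ ε > 0, PatientlyGuarantees₁ q g π (v - ε))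
    (h₂ : ∀ ε > 0, PatientlyGuarantees₂ q g π (v + ε)) : IsUniformValue q g π v := by
  intro ε hε
  obtain ⟨α₁, hα₁, σ, hσ, hle⟩ := h₁ ε hε
  obtain ⟨α₂, hα₂, τ, hτ, hge⟩ := h₂ ε hε
  exact ⟨min α₁ α₂, lt_min hα₁ hα₂, σ, τ, hσ, hτ, fun θ hθ hI =>
    ⟨hle θ hθ (hI.trans (min_le_left _ _)), hge θ hθ (hI.trans (min_le_right _ _))⟩⟩

lemma payoff_mem_Icc (hq : ∀ k i j, q k i j ∈ Δ (K × C × D))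
    (hg : ∀ k i j, g k i j ∈ Icc (0 : ℝ) 1) (hπ : π ∈ Δ (K × C × D)) {θ : ℕ → ℝ} (hθ : IsEval θ)
    {σ : List (C × I) → C → I → ℝ} {τ : List (D × J) → D → J → ℝ} (hσ : IsStrat1 σ)
    (hτ : IsStrat2 τ) : payoff q g π θ σ τ ∈ Icc (0 : ℝ) 1 := by
  have hX := stagePay_mem_Icc hq hπ hσ hτ hg
  refine ⟨tsum_nonneg fun t => mul_nonneg (hθ.1 t) (hX t).1, ?_⟩
  rw [← hθ.2]
  exact (hθ.summable_mul hX).tsum_le_tsum (fun t => mul_le_of_le_one_right (hθ.1 t) (hX t).2)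
    hθ.summable

section Values

variable {θ : ℕ → ℝ} {σ₀ : List (C × I) → C → I → ℝ} {τ₀ : List (D × J) → D → J → ℝ} {a b : ℝ}

lemma lowVal_mem_Icc
    (hpay : ∀ σ τ, IsStrat1 σ → IsStrat2 τ → payoff q g π θ σ τ ∈ Icc (0 : ℝ) 1)
    (hσ₀ : IsStrat1 σ₀) (hτ₀ : IsStrat2 τ₀) (ha : ∀ τ, IsStrat2 τ → a ≤ payoff q g π θ σ₀ τ)
    (hb : ∀ σ, IsStrat1 σ → payoff q g π θ σ τ₀ ≤ b) : lowVal q g π θ ∈ Icc a b := by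
  have hle : b ∈ upperBounds {c : ℝ | ∃ σ, IsStrat1 σ ∧
      c = sInf {r : ℝ | ∃ τ, IsStrat2 τ ∧ r = payoff q g π θ σ τ}} := by
    rintro c ⟨σ, hσ, rfl⟩
    refine csInf_le_of_le ⟨0, ?_⟩ ⟨τ₀, hτ₀, rfl⟩ (hb σ hσ)
    rintro r ⟨τ, hτ, rfl⟩
    exact (hpay σ τ hσ hτ).1
  refine ⟨le_csSup_of_le ⟨b, hle⟩ ⟨σ₀, hσ₀, rfl⟩ ?_, csSup_le ⟨_, σ₀, hσ₀, rfl⟩ hle⟩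
  refine le_csInf ⟨_, τ₀, hτ₀, rfl⟩ ?_
  rintro r ⟨τ, hτ, rfl⟩
  exact ha τ hτ

lemma upVal_mem_Icc
    (hpay : ∀ σ τ, IsStrat1 σ → IsStrat2 τ → payoff q g π θ σ τ ∈ Icc (0 : ℝ) 1)
    (hσ₀ : IsStrat1 σ₀) (hτ₀ : IsStrat2 τ₀) (ha : ∀ τ, IsStrat2 τ → a ≤ payoff q g π θ σ₀ τ)
    (hb : ∀ σ, IsStrat1 σ → payoff q g π θ σ τ₀ ≤ b) : upVal q g π θ ∈ Icc a b := by
  have hge : a ∈ lowerBounds {c : ℝ | ∃ τ, IsStrat2 τ ∧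
      c = sSup {r : ℝ | ∃ σ, IsStrat1 σ ∧ r = payoff q g π θ σ τ}} := by
    rintro c ⟨τ, hτ, rfl⟩
    refine le_csSup_of_le ⟨1, ?_⟩ ⟨σ₀, hσ₀, rfl⟩ (ha τ hτ)
    rintro r ⟨σ, hσ, rfl⟩
    exact (hpay σ τ hσ hτ).2
  refine ⟨le_csInf ⟨_, τ₀, hτ₀, rfl⟩ hge, csInf_le_of_le ⟨a, hge⟩ ⟨τ₀, hτ₀, rfl⟩ ?_⟩
  refine csSup_le ⟨_, σ₀, hσ₀, rfl⟩ ?_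
  rintro r ⟨σ, hσ, rfl⟩
  exact hb σ hσ

end Values

lemma IsUniformValue.exists_forall_abs_sub_le {v : ℝ} (hv : IsUniformValue q g π v)
    (hq : ∀ k i j, q k i j ∈ Δ (K × C × D)) (hg : ∀ k i j, g k i j ∈ Icc (0 : ℝ) 1)
    (hπ : π ∈ Δ (K × C × D)) {ε : ℝ} (hε : 0 < ε) :
    ∃ α > 0, ∀ θ, IsEval θ → impatience θ ≤ α →
      |lowVal q g π θ - v| ≤ ε ∧ |upVal q g π θ - v| ≤ ε := by
  obtain ⟨α, hα, σ, τ, hσ, hτ, h⟩ := hv ε hε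
  refine ⟨α, hα, fun θ hθ hI => ?_⟩
  obtain ⟨hlow, hup⟩ := h θ hθ hI
  have hpay : ∀ σ' τ', IsStrat1 σ' → IsStrat2 τ' → payoff q g π θ σ' τ' ∈ Icc (0 : ℝ) 1 :=
    fun _ _ => payoff_mem_Icc hq hg hπ hθ
  rw [abs_sub_comm, mem_Icc_iff_abs_le, abs_sub_comm, mem_Icc_iff_abs_le]
  exact ⟨lowVal_mem_Icc hpay hσ hτ hlow hup, upVal_mem_Icc hpay hσ hτ hlow hup⟩

section InformedController

variable [Nonempty I] [Nonempty J] {kt : C → K} {dt : C → D} {Q : K → I → K × D → ℝ} {v ε : ℝ}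

lemma patientlyGuarantees₁_sub [Nonempty K] (hq : ∀ k i j, q k i j ∈ Δ (K × C × D))
    (hq' : ∀ k i j, Informs kt dt (q k i j)) (hg : ∀ k i j, g k i j ∈ Icc (0 : ℝ) 1)
    (hπ : π ∈ Δ (K × C × D)) (hπ' : Informs kt dt π) (hQ : ∀ k i j, marginal (q k i j) = Q k i)
    (hε : 0 < ε) (hv : ∀ ε > 0, ∀ n : ℕ, ∃ m, ∃ B ∈ flowFamily Q (marginal π),
      n * (v - ε) ≤ ∑ t ∈ Finset.range n, familyGuarantee g (m + t) B) :
    PatientlyGuarantees₁ q g π (v - ε) := by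
  have hQΔ : ∀ k i, Q k i ∈ Δ (K × D) := fun k i =>
    hQ k i (Classical.arbitrary J) ▸ marginal_mem_Δ (hq _ _ _)
  obtain ⟨N, hN, B, hB, hwindow⟩ := exists_forall_window_le_familyGuarantee hQΔ hg
    (marginal_mem_Δ hπ) (div_pos hε (by norm_num : (0 : ℝ) < 12)) (hv _ (by positivity))
  have hσ : IsStrat1 (realize kt dt B) := isStrat1_realize kt dt hB
  refine ⟨ε / (2 * N), by positivity, _, hσ, fun θ hθ hI τ hτ => ?_⟩
  have hpay := hθ.sub_le_tsum_mul (stagePay_mem_Icc hq hπ hσ hτ hg) hN fun m =>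
    (hwindow m).trans <| Finset.sum_le_sum fun r _ =>
      familyGuarantee_le_stagePay_realize hq' hπ' hQ hB g hτ (m + r)
  rw [le_div_iff₀ (by positivity)] at hI
  rw [payoff]
  linarith

lemma patientlyGuarantees₂_add (hq : ∀ k i j, q k i j ∈ Δ (K × C × D))
    (hg : ∀ k i j, g k i j ∈ Icc (0 : ℝ) 1) (hπ : π ∈ Δ (K × C × D))
    (hQ : ∀ k i j, marginal (q k i j) = Q k i) (hε : 0 < ε)
    (hv : ∀ ε > 0, ∃ n : ℕ, n ≠ 0 ∧ ∀ m, ∀ B ∈ flowFamily Q (marginal π),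
      ∑ t ∈ Finset.range n, familyGuarantee g (m + t) B ≤ n * (v + ε)) :
    PatientlyGuarantees₂ q g π (v + ε) := by
  have hQΔ : ∀ k i, Q k i ∈ Δ (K × D) := fun k i =>
    hQ k i (Classical.arbitrary J) ▸ marginal_mem_Δ (hq _ _ _)
  obtain ⟨n, hn, hblock⟩ := hv (ε / 4) (by positivity)
  obtain ⟨N, hN, τ, hτΔ, hwindow⟩ := exists_forall_window_familyPay_le hQΔ hg
    (marginal_mem_Δ hπ).1 (by positivity) hn hblock
  have hτ : IsStrat2 (ofSignals τ) := fun _ _ => hτΔ _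
  refine ⟨ε / (2 * N), by positivity, _, hτ, fun θ hθ hI σ hσ => ?_⟩
  have hpay := hθ.tsum_mul_le (stagePay_mem_Icc hq hπ hσ hτ hg) hN fun m => by
    simpa only [familyPay_inducedFlow] using
      hwindow _ (inducedFlow_mem_flowFamily hq hπ hQ hσ hτ) m
  rw [le_div_iff₀ (by positivity)] at hI
  rw [payoff]
  linarith

lemma exists_isUniformValue [Nonempty K] (hq : ∀ k i j, q k i j ∈ Δ (K × C × D))
    (hq' : ∀ k i j, Informs kt dt (q k i j)) (hg : ∀ k i j, g k i j ∈ Icc (0 : ℝ) 1)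
    (hπ : π ∈ Δ (K × C × D)) (hπ' : Informs kt dt π)
    (hQ : ∀ k i j j', marginal (q k i j) = marginal (q k i j')) : ∃ v, IsUniformValue q g π v := by
  let j₀ : J := Classical.arbitrary J
  obtain ⟨v, hle, hge⟩ := exists_value (fun k i => marginal_mem_Δ (hq k i j₀)) hg
    (marginal_mem_Δ hπ)
  exact ⟨v, isUniformValue_of_patientlyGuarantees
    (fun ε hε => patientlyGuarantees₁_sub hq hq' hg hπ hπ' (fun k i j => hQ k i j j₀) hε hge)
    fun ε hε => patientlyGuarantees₂_add hq hg hπ (fun k i j => hQ k i j j₀) hε hle⟩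

end InformedController

end UniformValue

end Stmt19

/-- **Theorem 7 (Renault–Venel).** Every zero-sum repeated game with an informed
controller has a general uniform value: the `θ`-values converge to some `v*(π)` as
`I(θ) → 0`, and for every `ε > 0` there are `α > 0` and strategies `σ*`, `τ*`
guaranteeing `v*(π)` up to `ε` in every game with evaluation `θ` such that `I(θ) ≤ α`. -/
theorem stmt19 (K I J C D : Type*) [Fintype K] [Fintype I] [Fintype J]
    [Fintype C] [Fintype D] [Nonempty K] [Nonempty I] [Nonempty J]
    [Nonempty C] [Nonempty D]
    (q : K → I → J → (K × C × D → ℝ)) (hq : ∀ k i j, q k i j ∈ Stmt19.Δ (K × C × D))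
    (g : K → I → J → ℝ) (hg : ∀ k i j, g k i j ∈ Icc (0:ℝ) 1)
    (π : K × C × D → ℝ) (hπ : π ∈ Stmt19.Δ (K × C × D))
    -- Assumption 1: player 1 always knows the state and player 2's signal
    (kt : C → K) (dt : C → D)
    (hq1 : ∀ (k : K) (i : I) (j : J) (k' : K) (c' : C) (d' : D),
      ¬(kt c' = k' ∧ dt c' = d') → q k i j (k', c', d') = 0)
    (hπ1 : ∀ (k : K) (c : C) (d : D), ¬(kt c = k ∧ dt c = d) → π (k, c, d) = 0)
    -- Assumption 2: the marginal of the transition on `K × D` does not depend on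
    -- player 2's action
    (hq2 : ∀ (k : K) (i : I) (j j' : J) (k' : K) (d' : D),
      ∑ c', q k i j (k', c', d') = ∑ c', q k i j' (k', c', d')) :
    ∃ vstar : ℝ,
      -- general limit value
      (∀ ε > (0:ℝ), ∃ α > (0:ℝ), ∀ θ : ℕ → ℝ, Stmt19.IsEval θ →
        Stmt19.impatience θ ≤ α →
          |Stmt19.lowVal q g π θ - vstar| ≤ ε ∧ |Stmt19.upVal q g π θ - vstar| ≤ ε) ∧
      -- general uniform value
      (∀ ε > (0:ℝ), ∃ α > (0:ℝ), ∃ σstar τstar,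
        Stmt19.IsStrat1 σstar ∧ Stmt19.IsStrat2 τstar ∧
        ∀ θ : ℕ → ℝ, Stmt19.IsEval θ → Stmt19.impatience θ ≤ α →
          (∀ τ, Stmt19.IsStrat2 τ → Stmt19.payoff q g π θ σstar τ ≥ vstar - ε) ∧
          (∀ σ, Stmt19.IsStrat1 σ → Stmt19.payoff q g π θ σ τstar ≤ vstar + ε)) := by
  obtain ⟨v, hv⟩ := Stmt19.exists_isUniformValue hq hq1 hg hπ hπ1
    fun k i j j' => funext fun y => hq2 k i j j' y.1 y.2
  exact ⟨v, fun ε hε => hv.exists_forall_abs_sub_le hq hg hπ hε, hv⟩
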